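/- arXiv:1404.4485 — 4 statements merged into one kernel-verified Lean document; each statement's English description precedes it below -/
import Mathlib

section
/- For every n ≥ 2: an n-tuple (x₁,…,xₙ) ∈ (ℝ²)ⁿ minimizes w̄_n over (ℝ²)ⁿ if and only if (T(x₁),…,T(xₙ)) minimizes E_log over all n-tuples of points of S; and (x₁,…,xₙ) minimizes w_n over (ℝ²)ⁿ if and only if (T(x₁),…,T(xₙ), N) minimizes E_log over all (n+1)-tuples of points of S. (Here w_n, w̄_n and E_log are regarded as taking the value +∞ at tuples with coinciding points.) -/
open Real Classical

/-- The inverse stereographic projection onto the sphere of radius `1/2`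
centered at `(0,0,1/2)`. -/
noncomputable def stereoT (x : EuclideanSpace ℝ (Fin 2)) : EuclideanSpace ℝ (Fin 3) :=
  (WithLp.equiv 2 (Fin 3 → ℝ)).symm
    ![x 0 / (1 + ‖x‖^2), x 1 / (1 + ‖x‖^2), ‖x‖^2 / (1 + ‖x‖^2)]

/-- The north pole `N = (0,0,1)`. -/
noncomputable def northPole : EuclideanSpace ℝ (Fin 3) :=
  (WithLp.equiv 2 (Fin 3 → ℝ)).symm ![0, 0, 1]

/-- The center `(0,0,1/2)` of the sphere `S`. -/
noncomputable def sphereCenter : EuclideanSpace ℝ (Fin 3) :=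
  (WithLp.equiv 2 (Fin 3 → ℝ)).symm ![0, 0, 1/2]

/-- The logarithmic energy, with value `+∞` at tuples with coinciding points. -/
noncomputable def ElogE {m : ℕ} (y : Fin m → EuclideanSpace ℝ (Fin 3)) : EReal :=
  if Function.Injective y then
    ((-∑ i : Fin m, ∑ j : Fin m, if i ≠ j then Real.log (dist (y i) (y j)) else 0 : ℝ) : EReal)
  else ⊤

/-- The Hamiltonian `w_n`, with value `+∞` at tuples with coinciding points. -/
noncomputable def wHamE (n : ℕ) (x : Fin n → EuclideanSpace ℝ (Fin 2)) : EReal :=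
  if Function.Injective x then
    ((-∑ i : Fin n, ∑ j : Fin n, (if i ≠ j then Real.log (dist (x i) (x j)) else 0)
      + (n : ℝ) * ∑ i : Fin n, Real.log (1 + ‖x i‖^2) : ℝ) : EReal)
  else ⊤

/-- The Hamiltonian `w̄_n`, with value `+∞` at tuples with coinciding points. -/
noncomputable def wbarHamE (n : ℕ) (x : Fin n → EuclideanSpace ℝ (Fin 2)) : EReal :=
  if Function.Injective x then
    ((-∑ i : Fin n, ∑ j : Fin n, (if i ≠ j then Real.log (dist (x i) (x j)) else 0)
      + ((n : ℝ) - 1) * ∑ i : Fin n, Real.log (1 + ‖x i‖^2) : ℝ) : EReal)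
  else ⊤

lemma aux_norm2 (x : EuclideanSpace ℝ (Fin 2)) : ‖x‖^2 = x 0 ^2 + x 1 ^2 := by
  rw [EuclideanSpace.norm_sq_eq]; simp [Fin.sum_univ_two]

lemma aux_dist2 (x z : EuclideanSpace ℝ (Fin 2)) :
    dist x z ^2 = (x 0 - z 0) ^2 + (x 1 - z 1)^2 := by
  rw [dist_eq_norm, aux_norm2]; simp

lemma aux_dist3 (x z : EuclideanSpace ℝ (Fin 3)) :
    dist x z ^2 = (x 0 - z 0) ^2 + (x 1 - z 1)^2 + (x 2 - z 2)^2 := by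
  rw [dist_eq_norm, EuclideanSpace.norm_sq_eq]; simp [Fin.sum_univ_three]

lemma aux_mem (y : EuclideanSpace ℝ (Fin 3)) :
    y ∈ Metric.sphere sphereCenter (1/2) ↔ y 0 ^2 + y 1 ^2 + y 2 ^2 = y 2 := by
  rw [Metric.mem_sphere, ← sq_eq_sq₀ dist_nonneg (by norm_num), aux_dist3]
  simp only [sphereCenter, WithLp.equiv_symm_apply, PiLp.toLp_apply, Matrix.cons_val]
  constructor <;> intro h <;> nlinarith

lemma aux_T_mem (x : EuclideanSpace ℝ (Fin 2)) : stereoT x ∈ Metric.sphere sphereCenter (1/2) := by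
  rw [aux_mem]
  simp only [stereoT, WithLp.equiv_symm_apply, PiLp.toLp_apply, Matrix.cons_val]
  have h : 0 < 1 + ‖x‖^2 := by positivity
  rw [aux_norm2] at *
  field_simp

lemma aux_N_mem : northPole ∈ Metric.sphere sphereCenter (1/2) := by
  rw [aux_mem]
  simp [northPole]

lemma aux_distT (x z : EuclideanSpace ℝ (Fin 2)) :
    dist (stereoT x) (stereoT z) ^2 = dist x z ^2 / ((1 + ‖x‖^2) * (1 + ‖z‖^2)) := by
  have h : 0 < 1 + ‖x‖^2 := by positivity
  have h' : 0 < 1 + ‖z‖^2 := by positivity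
  rw [aux_dist3, aux_dist2]
  simp only [stereoT, WithLp.equiv_symm_apply, PiLp.toLp_apply, Matrix.cons_val]
  rw [aux_norm2] at *
  rw [aux_norm2] at *
  field_simp
  ring

lemma aux_distN (x : EuclideanSpace ℝ (Fin 2)) :
    dist (stereoT x) northPole ^2 = 1 / (1 + ‖x‖^2) := by
  have h : 0 < 1 + ‖x‖^2 := by positivity
  rw [aux_dist3]
  simp only [stereoT, northPole, WithLp.equiv_symm_apply, PiLp.toLp_apply, Matrix.cons_val]
  rw [aux_norm2] at *
  field_simp
  ring

lemma aux_T_inj : Function.Injective stereoT := by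
  intro x z h
  have h1 := aux_distT x z
  rw [h, dist_self] at h1
  have h2 : 0 < (1 + ‖x‖^2) * (1 + ‖z‖^2) := by positivity
  rw [eq_comm, div_eq_iff h2.ne'] at h1
  simpa using h1

lemma aux_T_ne (x : EuclideanSpace ℝ (Fin 2)) : stereoT x ≠ northPole := by
  intro h
  have h1 := aux_distN x
  rw [h, dist_self] at h1
  have h2 : 0 < 1 / (1 + ‖x‖^2) := by positivity
  rw [← h1] at h2
  norm_num at h2

lemma aux_logT (x z : EuclideanSpace ℝ (Fin 2)) (hxz : x ≠ z) :
    Real.log (dist (stereoT x) (stereoT z)) = Real.log (dist x z)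
      - (Real.log (1 + ‖x‖^2) + Real.log (1 + ‖z‖^2)) / 2 := by
  have h : 0 < 1 + ‖x‖^2 := by positivity
  have h' : 0 < 1 + ‖z‖^2 := by positivity
  have hd := dist_pos.2 hxz
  have := congrArg Real.log (aux_distT x z)
  rw [Real.log_div (by positivity) (by positivity), Real.log_mul h.ne' h'.ne',
    Real.log_pow, Real.log_pow] at this
  push_cast at this
  linarith

lemma aux_logN (x : EuclideanSpace ℝ (Fin 2)) :
    Real.log (dist (stereoT x) northPole) = - Real.log (1 + ‖x‖^2) / 2 := by
  have := congrArg Real.log (aux_distN x)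
  rw [one_div, Real.log_inv, Real.log_pow] at this
  push_cast at this
  linarith

lemma aux_surj (y : EuclideanSpace ℝ (Fin 3)) (hy : y ∈ Metric.sphere sphereCenter (1/2))
    (hN : y ≠ northPole) : ∃ x, stereoT x = y := by
  rw [aux_mem] at hy
  have h2 : y 2 ≠ 1 := by
    intro h
    apply hN
    rw [h] at hy
    have h0 : y 0 = 0 := by nlinarith [sq_nonneg (y 0), sq_nonneg (y 1)]
    have h1 : y 1 = 0 := by nlinarith [sq_nonneg (y 0), sq_nonneg (y 1)]
    ext i
    fin_cases i <;> simp [northPole, h0, h1, h]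
  have h3 : 1 - y 2 ≠ 0 := fun h => h2 (by linarith)
  have hn : 1 + ‖(!₂[y 0 / (1 - y 2), y 1 / (1 - y 2)] : EuclideanSpace ℝ (Fin 2))‖^2
      = 1 / (1 - y 2) := by
    rw [aux_norm2]
    simp only [PiLp.toLp_apply, Matrix.cons_val]
    field_simp
    linarith
  refine ⟨!₂[y 0 / (1 - y 2), y 1 / (1 - y 2)], ?_⟩
  have hn' := eq_sub_of_add_eq' hn
  ext i
  fin_cases i
  · simp only [stereoT, hn]; simp; field_simp
  · simp only [stereoT, hn]; simp; field_simp
  · simp only [stereoT, hn]; rw [hn']; simp; field_simp; ring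

lemma aux_energy_bar (n : ℕ) (x : Fin n → EuclideanSpace ℝ (Fin 2)) :
    ElogE (fun i => stereoT (x i)) = wbarHamE n x := by
  unfold ElogE wbarHamE
  have hi : Function.Injective (fun i => stereoT (x i)) ↔ Function.Injective x :=
    aux_T_inj.of_comp_iff x
  by_cases hx : Function.Injective x
  · rw [if_pos (hi.2 hx), if_pos hx]
    congr 1
    have key : ∀ i j : Fin n,
        (if i ≠ j then Real.log (dist (stereoT (x i)) (stereoT (x j))) else 0) =
        (if i ≠ j then Real.log (dist (x i) (x j)) else 0)
          - ((Real.log (1 + ‖x i‖^2) + Real.log (1 + ‖x j‖^2)) / 2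
            - if i = j then Real.log (1 + ‖x i‖^2) else 0) := by
      intro i j
      by_cases h : i = j
      · subst h; simp
      · simp only [ne_eq, h, not_false_eq_true, if_true, if_false]
        rw [aux_logT _ _ (fun e => h (hx e))]; ring
    simp only [key, Finset.sum_sub_distrib, ← Finset.sum_div, Finset.sum_add_distrib,
      Finset.sum_const, Finset.card_univ, Fintype.card_fin, nsmul_eq_mul, Finset.sum_ite_eq,
      Finset.mem_univ, if_true, ← Finset.mul_sum]
    ring
  · rw [if_neg (fun h => hx (hi.1 h)), if_neg hx]

lemma aux_energy (n : ℕ) (x : Fin n → EuclideanSpace ℝ (Fin 2)) :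
    ElogE (Fin.snoc (fun i => stereoT (x i)) northPole : Fin (n+1) → _) = wHamE n x := by
  have hb := aux_energy_bar n x
  unfold ElogE wbarHamE at hb
  unfold ElogE wHamE
  have hi : Function.Injective (fun i => stereoT (x i)) ↔ Function.Injective x :=
    aux_T_inj.of_comp_iff x
  have hi' : Function.Injective (Fin.snoc (fun i => stereoT (x i)) northPole : Fin (n+1) → _) ↔
      Function.Injective x := by
    rw [Fin.snoc_injective_iff, hi]
    simp [aux_T_ne]
  by_cases hx : Function.Injective x
  · rw [if_pos (hi.2 hx), if_pos hx, EReal.coe_eq_coe_iff] at hb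
    rw [if_pos (hi'.2 hx), if_pos hx]
    congr 1
    simp only [Fin.sum_univ_castSucc, Fin.snoc_castSucc, Fin.snoc_last, ne_eq,
      Fin.castSucc_inj, Fin.castSucc_ne_last, (Fin.castSucc_ne_last _).symm, not_true_eq_false,
      not_false_eq_true, if_true, if_false, Finset.sum_add_distrib, dist_comm northPole,
      aux_logN, ← Finset.sum_div, Finset.sum_neg_distrib] at hb ⊢
    linarith
  · rw [if_neg (fun h => hx (hi'.1 h)), if_neg hx]

lemma aux_isom (p : EuclideanSpace ℝ (Fin 3)) (hp : p ∈ Metric.sphere sphereCenter (1/2)) :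
    ∃ e : EuclideanSpace ℝ (Fin 3) → EuclideanSpace ℝ (Fin 3), Isometry e ∧ e p = northPole ∧
      ∀ y ∈ Metric.sphere sphereCenter (1/2), e y ∈ Metric.sphere sphereCenter (1/2) := by
  have hN := aux_N_mem
  rw [mem_sphere_iff_norm] at hp hN
  have hr := Submodule.reflection_sub (hp.trans hN.symm)
  set R := (ℝ ∙ (p - sphereCenter - (northPole - sphereCenter)))ᗮ.reflection
  refine ⟨fun y => sphereCenter + R (y - sphereCenter), ?_, ?_, ?_⟩
  · apply Isometry.of_dist_eq
    intro a b
    simp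
  · simp only [hr]; abel
  · intro y hy
    rw [mem_sphere_iff_norm] at hy ⊢
    rw [add_sub_cancel_left, LinearIsometryEquiv.norm_map]; exact hy

lemma aux_E_isom {m : ℕ} (y : Fin m → EuclideanSpace ℝ (Fin 3))
    (e : EuclideanSpace ℝ (Fin 3) → EuclideanSpace ℝ (Fin 3)) (he : Isometry e) :
    ElogE (fun i => e (y i)) = ElogE y := by
  unfold ElogE
  have hi : Function.Injective (fun i => e (y i)) ↔ Function.Injective y :=
    he.injective.of_comp_iff y
  simp only [hi, he.dist_eq]

/-- `(x₁,…,xₙ)` minimizes `w̄_n` iff `(T(x₁),…,T(xₙ))` minimizes `E_log` over `n`-tuples of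
points of `S`, and `(x₁,…,xₙ)` minimizes `w_n` iff `(T(x₁),…,T(xₙ),N)` minimizes `E_log`
over `(n+1)`-tuples of points of `S`. -/
theorem minimize_wHam_iff (n : ℕ) (hn : 2 ≤ n) (x : Fin n → EuclideanSpace ℝ (Fin 2)) :
    ((∀ z : Fin n → EuclideanSpace ℝ (Fin 2), wbarHamE n x ≤ wbarHamE n z) ↔
      (∀ y : Fin n → EuclideanSpace ℝ (Fin 3),
        (∀ i, y i ∈ Metric.sphere sphereCenter (1/2)) →
        ElogE (fun i => stereoT (x i)) ≤ ElogE y)) ∧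
    ((∀ z : Fin n → EuclideanSpace ℝ (Fin 2), wHamE n x ≤ wHamE n z) ↔
      (∀ y : Fin (n+1) → EuclideanSpace ℝ (Fin 3),
        (∀ i, y i ∈ Metric.sphere sphereCenter (1/2)) →
        ElogE (Fin.snoc (fun i => stereoT (x i)) northPole) ≤ ElogE y)) := by
  refine ⟨⟨?_, ?_⟩, ⟨?_, ?_⟩⟩
  · intro h y hy
    rw [aux_energy_bar]
    have hinf : (Set.range stereoT).Infinite := Set.infinite_range_of_injective aux_T_inj
    obtain ⟨p, ⟨q, rfl⟩, hp⟩ := hinf.exists_notMem_finite (Set.finite_range y)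
    obtain ⟨e, he, hep, hes⟩ := aux_isom _ (aux_T_mem q)
    have hs : ∀ i, ∃ z, stereoT z = e (y i) := fun i =>
      aux_surj _ (hes _ (hy i)) (fun h' => hp ⟨i, he.injective (h'.trans hep.symm)⟩)
    choose z hz using hs
    rw [← aux_E_isom y e he]
    simp only [← hz]
    rw [aux_energy_bar]
    exact h z
  · intro h z
    rw [← aux_energy_bar, ← aux_energy_bar]
    exact h _ (fun i => aux_T_mem _)
  · intro h y hy
    rw [aux_energy]
    by_cases hinj : Function.Injective y
    · obtain ⟨e, he, hep, hes⟩ := aux_isom _ (hy (Fin.last n))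
      have hs : ∀ i : Fin n, ∃ z, stereoT z = e (y i.castSucc) := fun i =>
        aux_surj _ (hes _ (hy _)) (fun h' =>
          Fin.castSucc_ne_last i (hinj (he.injective (h'.trans hep.symm))))
      choose z hz using hs
      have : (fun i => e (y i)) = (Fin.snoc (fun i => stereoT (z i)) northPole : Fin (n+1) → _) := by
        ext1 i
        refine Fin.lastCases ?_ (fun j => ?_) i
        · simp [hep]
        · simp [hz]
      rw [← aux_E_isom y e he, this, aux_energy]
      exact h z
    · rw [ElogE, if_neg hinj]
      exact le_top
  · intro h z
    rw [← aux_energy, ← aux_energy]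
    refine h _ (fun i => ?_)
    refine Fin.lastCases ?_ (fun j => ?_) i
    · simpa using aux_N_mem
    · simpa using aux_T_mem _
end

section
/- Suppose that for every n ≥ 2 the n-tuple (x₁ⁿ,…,xₙⁿ) ∈ (ℝ²)ⁿ minimizes w̄_n over (ℝ²)ⁿ (or, alternatively, minimizes w_n over (ℝ²)ⁿ). Then the empirical probability measures (1/n)∑_{i=1}^n δ_{xᵢⁿ} converge weakly, as n → ∞, to the measure μ_V. -/
open Real Classical Filter MeasureTheory

/-- The equilibrium measure `μ_V`, with density `1/(π(1+|x|²)²)` w.r.t. Lebesgue measure. -/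
noncomputable def muV : Measure (EuclideanSpace ℝ (Fin 2)) :=
  volume.withDensity fun x => ENNReal.ofReal (1 / (π * (1 + ‖x‖^2)^2))


open scoped ComplexOrder in
/-- AM-GM form of the Hadamard inequality. -/
lemma det_norm_le_one {N : ℕ} (A : Matrix (Fin N) (Fin N) ℂ)
    (h : ∀ i, ∑ k, ‖A i k‖ ^ 2 = 1) : ‖A.det‖ ≤ 1 := by
  rcases Nat.eq_zero_or_pos N with rfl | hN
  · simp
  have hP : (A * A.conjTranspose).PosSemidef := Matrix.posSemidef_self_mul_conjTranspose A
  have hdet := hP.isHermitian.det_eq_prod_eigenvalues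
  have htr := hP.isHermitian.trace_eq_sum_eigenvalues
  have h1 : (A * A.conjTranspose).trace = (N : ℂ) := by
    simp only [Matrix.trace, Matrix.diag, Matrix.mul_apply, Matrix.conjTranspose_apply]
    have : ∀ i, ∑ k, A i k * star (A i k) = 1 := by
      intro i
      have := h i
      have h2 : ((∑ k, ‖A i k‖ ^ 2 : ℝ) : ℂ) = 1 := by rw [this]; simp
      rw [← h2]
      push_cast
      refine Finset.sum_congr rfl fun k _ => ?_
      exact Complex.mul_conj' _
    rw [Finset.sum_congr rfl (fun i _ => this i)]
    simp
  have h2 : ∑ i, hP.isHermitian.eigenvalues i = N := by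
    have : ((∑ i, hP.isHermitian.eigenvalues i : ℝ) : ℂ) = (N : ℝ) := by
      push_cast; rw [← h1, htr]; simp
    exact_mod_cast this
  have h3 : ‖A.det‖ ^ 2 = ∏ i, hP.isHermitian.eigenvalues i := by
    have : ((‖A.det‖ ^ 2 : ℝ) : ℂ) = ((∏ i, hP.isHermitian.eigenvalues i : ℝ) : ℂ) := by
      rw [Complex.ofReal_prod]
      refine Eq.trans ?_ hdet
      rw [Matrix.det_mul, Matrix.det_conjTranspose]
      push_cast
      exact (Complex.mul_conj' _).symm
    exact_mod_cast this
  have hNr : (0:ℝ) < N := by exact_mod_cast hN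
  have h5 := Real.geom_mean_le_arith_mean_weighted Finset.univ (fun _ => (1:ℝ)/N)
    hP.isHermitian.eigenvalues (fun _ _ => by positivity)
    (by simp; field_simp) (fun i _ => hP.eigenvalues_nonneg i)
  rw [← Finset.mul_sum, h2, Real.finsetProd_rpow _ _ (fun i _ => hP.eigenvalues_nonneg i), ← h3] at h5
  rw [one_div, inv_mul_cancel₀ hNr.ne'] at h5
  have h6 : ‖A.det‖ ^ 2 ≤ 1 := by
    by_contra hc
    push Not at hc
    exact absurd h5 (not_le.2 (Real.one_lt_rpow hc (by positivity)))
  nlinarith [norm_nonneg A.det]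

lemma log_vandermonde {N : ℕ} (x : Fin N → ℂ) (hx : Function.Injective x) :
    ∑ i, ∑ j, (if i ≠ j then Real.log ‖x i - x j‖ else 0) =
      2 * Real.log ‖(Matrix.vandermonde x).det‖ := by
  have h1 : Real.log ‖(Matrix.vandermonde x).det‖ =
      ∑ i, ∑ j, if i < j then Real.log ‖x i - x j‖ else 0 := by
    rw [Matrix.det_vandermonde, norm_prod, Real.log_prod]
    · refine Finset.sum_congr rfl fun i _ => ?_
      rw [norm_prod, Real.log_prod, ← Finset.sum_filter]
      · refine Finset.sum_congr ?_ fun j _ => by rw [norm_sub_rev]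
        ext j; simp
      · intro j hj
        rw [norm_ne_zero_iff, sub_ne_zero]
        exact hx.ne (ne_of_gt (by simpa using hj))
    · intro i _
      rw [norm_prod, Finset.prod_ne_zero_iff]
      intro j hj
      rw [norm_ne_zero_iff, sub_ne_zero]
      exact hx.ne (ne_of_gt (by simpa using hj))
  have h2 : Real.log ‖(Matrix.vandermonde x).det‖ =
      ∑ i, ∑ j, if j < i then Real.log ‖x i - x j‖ else 0 := by
    rw [h1, Finset.sum_comm]
    simp_rw [norm_sub_rev]
  rw [two_mul]
  nth_rewrite 1 [h1]
  rw [h2, ← Finset.sum_add_distrib]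
  refine Finset.sum_congr rfl fun i _ => ?_
  rw [← Finset.sum_add_distrib]
  refine Finset.sum_congr rfl fun j _ => ?_
  rcases lt_trichotomy i j with h | h | h
  · simp [h, h.ne, h.not_gt]
  · simp [h]
  · simp [h, h.ne', h.not_gt]

lemma energy_upper {m : ℕ} (x : Fin (m+1) → ℂ) (hx : Function.Injective x) :
    ∑ i, ∑ j, (if i ≠ j then Real.log ‖x i - x j‖ else 0)
      - m * ∑ i, Real.log (1 + ‖x i‖^2) ≤ - ∑ k ∈ Finset.range (m+1), Real.log (m.choose k) := by
  rw [log_vandermonde x hx]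
  set d : Fin (m+1) → ℂ := fun i => (((√(1 + ‖x i‖^2))^m)⁻¹ : ℝ) with hd
  set c : Fin (m+1) → ℂ := fun k => (√(m.choose k) : ℝ) with hc
  have hV : (Matrix.vandermonde x).det ≠ 0 := Matrix.det_vandermonde_ne_zero_iff.2 hx
  have hpos : ∀ i, 0 < 1 + ‖x i‖^2 := fun i => by positivity
  have key := det_norm_le_one (Matrix.diagonal d * Matrix.vandermonde x * Matrix.diagonal c) (by
    intro i
    have : ∀ k : Fin (m+1), ‖(Matrix.diagonal d * Matrix.vandermonde x * Matrix.diagonal c) i k‖^2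
       = ((1 + ‖x i‖^2)^m)⁻¹ * ((‖x i‖^2)^(k:ℕ) * m.choose k) := by
      intro k
      rw [Matrix.mul_diagonal, Matrix.diagonal_mul, norm_mul, norm_mul, mul_pow, mul_pow]
      simp only [hd, hc, Complex.norm_real, Matrix.vandermonde_apply, norm_pow, Real.norm_eq_abs, sq_abs]
      rw [Real.sq_sqrt (Nat.cast_nonneg _), inv_pow, ← pow_mul, mul_comm m 2, pow_mul,
        Real.sq_sqrt (hpos i).le]
      ring
    simp_rw [this]
    rw [← Finset.mul_sum, Fin.sum_univ_eq_sum_range (fun k => (‖x i‖^2)^k * (m.choose k : ℝ))]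
    have h2 := add_pow (‖x i‖^2) 1 m
    simp only [one_pow, mul_one] at h2
    rw [← h2, add_comm (‖x i‖^2) 1]
    exact inv_mul_cancel₀ (pow_pos (hpos i) m).ne')
  rw [Matrix.det_mul, Matrix.det_mul, Matrix.det_diagonal, Matrix.det_diagonal, norm_mul, norm_mul,
    norm_prod, norm_prod] at key
  have hdpos : ∀ i, 0 < ‖d i‖ := fun i => by
    simp only [hd, Complex.norm_real, Real.norm_eq_abs]
    have := Real.sqrt_pos.2 (hpos i)
    positivity
  have hcpos : ∀ i, 0 < ‖c i‖ := fun i => by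
    simp only [hc, Complex.norm_real, Real.norm_eq_abs]
    have : (0:ℝ) < m.choose i := by exact_mod_cast Nat.choose_pos (by omega)
    have := Real.sqrt_pos.2 this
    positivity
  have hVp : 0 < ‖(Matrix.vandermonde x).det‖ := norm_pos_iff.2 hV
  have hdp : 0 < ∏ i, ‖d i‖ := Finset.prod_pos fun i _ => hdpos i
  have hcp : 0 < ∏ i, ‖c i‖ := Finset.prod_pos fun i _ => hcpos i
  have hl := Real.log_nonpos (by positivity) key
  rw [Real.log_mul (by positivity) (by positivity), Real.log_mul (by positivity) (by positivity),
    Real.log_prod (fun i _ => (hdpos i).ne'), Real.log_prod (fun i _ => (hcpos i).ne')] at hl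
  have e1 : ∀ i, Real.log ‖d i‖ = - (m/2 * Real.log (1 + ‖x i‖^2)) := by
    intro i
    simp only [hd, Complex.norm_real, Real.norm_eq_abs, Real.log_abs, Real.log_inv, Real.log_pow]
    rw [Real.log_sqrt (hpos i).le]; ring
  have e2 : ∀ k : Fin (m+1), Real.log ‖c k‖ = Real.log (m.choose k) / 2 := by
    intro k
    simp only [hc, Complex.norm_real, Real.norm_eq_abs, Real.log_abs]
    rw [Real.log_sqrt (Nat.cast_nonneg _)]
  simp_rw [e1, e2] at hl
  rw [← Fin.sum_univ_eq_sum_range (fun k => Real.log (m.choose k : ℝ))]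
  rw [Finset.sum_neg_distrib, ← Finset.mul_sum, ← Finset.sum_div] at hl
  linarith

lemma factorial_bound (m : ℕ) :
    (m:ℝ) - (harmonic m : ℝ) ≤ m * Real.log m - Real.log (m.factorial) := by
  induction m with
  | zero => simp
  | succ m ih =>
    rw [harmonic_succ, Nat.factorial_succ]
    push_cast
    rw [Real.log_mul (by positivity) (by positivity)]
    rcases Nat.eq_zero_or_pos m with rfl | hm
    · simp
    have hm' : (0:ℝ) < m := by exact_mod_cast hm
    have h1 : Real.log m - Real.log (m+1) ≤ -(1/(m+1)) := by
      rw [← Real.log_div (by positivity) (by positivity)]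
      refine (Real.log_le_sub_one_of_pos (by positivity)).trans (le_of_eq ?_)
      field_simp; ring
    have h2 : (m:ℝ) * (Real.log m - Real.log (m+1)) ≤ m * (-(1/(m+1))) := by gcongr
    have h3 : (m:ℝ) * (-(1/(m+1))) = ((m:ℝ)+1)⁻¹ - 1 := by field_simp; ring
    nlinarith

lemma sum_log_choose_succ (m : ℕ) :
    ∑ k ∈ Finset.range (m+1+1), Real.log ((m+1).choose k) =
    ∑ k ∈ Finset.range (m+1), Real.log (m.choose k) +
      ((m+1 : ℕ) * Real.log (m+1 : ℕ) - Real.log ((m+1).factorial)) := by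
  rw [Finset.sum_range_succ, Nat.choose_self]
  have h : ∀ k ∈ Finset.range (m+1), Real.log ((m+1).choose k) = Real.log (m.choose k) +
      (Real.log (m+1:ℕ) - Real.log ((m - k + 1 : ℕ))) := by
    intro k hk
    have hk' : k ≤ m := by simpa [Nat.lt_succ_iff] using hk
    have h1 := Nat.choose_mul_succ_eq m k
    have h2 : m + 1 - k = m - k + 1 := by omega
    rw [h2] at h1
    have h3 : ((m.choose k : ℝ)) * ((m+1 : ℕ):ℝ) = ((m+1).choose k : ℝ) * ((m - k + 1 : ℕ) : ℝ) := by
      exact_mod_cast h1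
    have p1 : (m.choose k : ℝ) ≠ 0 := by exact_mod_cast (Nat.choose_pos hk').ne'
    have p2 : ((m+1).choose k : ℝ) ≠ 0 := by exact_mod_cast (Nat.choose_pos (by omega)).ne'
    have h4 := congrArg Real.log h3
    rw [Real.log_mul p1 (by positivity), Real.log_mul p2 (by positivity)] at h4
    linarith
  rw [Finset.sum_congr rfl h, Finset.sum_add_distrib, Finset.sum_sub_distrib]
  have h5 : ∑ k ∈ Finset.range (m+1), Real.log ((m - k + 1 : ℕ)) = Real.log ((m+1).factorial) := by
    rw [← Finset.prod_range_add_one_eq_factorial]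
    push_cast
    rw [Real.log_prod (fun i _ => by positivity)]
    rw [← Finset.sum_range_reflect]
    refine Finset.sum_congr rfl fun k hk => ?_
    have hk' : k ≤ m := by simpa [Nat.lt_succ_iff] using hk
    congr 2
    have : m - (m + 1 - 1 - k) = k := by omega
    exact_mod_cast this
  rw [h5]
  simp

lemma sum_log_choose_ge (m : ℕ) :
    (m:ℝ)*(m+1)/2 - m * (1 + Real.log m) ≤ ∑ k ∈ Finset.range (m+1), Real.log (m.choose k) := by
  induction m with
  | zero => simp
  | succ m ih =>
    rw [sum_log_choose_succ]
    have h1 := factorial_bound (m+1)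
    have h2 := harmonic_le_one_add_log (m+1)
    have h3 : (m:ℝ) * Real.log m ≤ m * Real.log ((m+1 : ℕ):ℝ) := by
      rcases Nat.eq_zero_or_pos m with rfl | hm
      · simp
      gcongr
      simp
    push_cast at *
    nlinarith


/-- density of the equilibrium measure -/
noncomputable def mV (z : ℂ) : ℝ := 1 / (π * (1 + ‖z‖^2)^2)

/-- the potential -/
noncomputable def LV (z : ℂ) : ℝ := Real.log (1 + ‖z‖^2)

lemma mV_pos (z : ℂ) : 0 < mV z := by unfold mV; positivity
lemma mV_cont : Continuous mV := by
  unfold mV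
  refine Continuous.div continuous_const (by fun_prop) fun z => by positivity
lemma LV_cont : Continuous LV := by
  unfold LV
  exact Continuous.log (by fun_prop) fun z => by positivity
lemma LV_nonneg (z : ℂ) : 0 ≤ LV z := Real.log_nonneg (by nlinarith [sq_nonneg ‖z‖])
lemma mV_le_one (z : ℂ) : mV z ≤ 1 := by
  unfold mV
  rw [div_le_one (by positivity)]
  have := Real.pi_gt_three
  nlinarith [sq_nonneg ‖z‖, sq_nonneg (‖z‖^2)]

lemma polar_integral (g : ℂ → ℝ) (hg : Measurable g) (hi : Integrable g) :
    ∫ z, g z = ∫ r in Set.Ioi (0:ℝ), 2 * π * r * circleAverage g 0 r := by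
  rw [← Complex.integral_comp_polarCoord_symm]
  have hm : Measurable (fun p : ℝ × ℝ => p.1 • g (Complex.polarCoord.symm p)) := by
    simp only [Complex.polarCoord_symm_apply]
    refine Measurable.smul measurable_fst (hg.comp ?_)
    fun_prop
  have hIntegr : IntegrableOn (fun p : ℝ × ℝ => p.1 • g (Complex.polarCoord.symm p))
      polarCoord.target := by
    refine ⟨hm.aestronglyMeasurable, ?_⟩
    rw [hasFiniteIntegral_iff_enorm]
    have h1 := Complex.lintegral_comp_polarCoord_symm (fun z => ‖g z‖ₑ)
    have h2 := hi.2
    rw [hasFiniteIntegral_iff_enorm, ← h1] at h2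
    refine lt_of_le_of_lt (le_of_eq ?_) h2
    refine setLIntegral_congr_fun polarCoord.open_target.measurableSet (fun p hp => ?_)
    have : 0 < p.1 := hp.1
    simp only [smul_eq_mul, enorm_mul]
    rw [Real.enorm_of_nonneg this.le]
  rw [polarCoord_target] at hIntegr ⊢
  rw [Measure.volume_eq_prod] at hIntegr ⊢
  rw [setIntegral_prod _ hIntegr]
  refine setIntegral_congr_fun measurableSet_Ioi fun r hr => ?_
  simp only [smul_eq_mul]
  rw [integral_const_mul, circleAverage_eq_integral_add (-π)]
  have h3 : ∫ θ in (0:ℝ)..2*π, g (circleMap 0 r (θ + -π)) = ∫ θ in (-π)..π, g (circleMap 0 r θ) := by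
    rw [intervalIntegral.integral_comp_add_right (fun θ => g (circleMap 0 r θ))]
    congr 1 <;> ring
  rw [h3, intervalIntegral.integral_of_le (by linarith [Real.pi_pos]), integral_Ioc_eq_integral_Ioo]
  have h4 : ∀ θ : ℝ, Complex.polarCoord.symm (r, θ) = circleMap 0 r θ := by
    intro θ
    simp [circleMap, Complex.exp_mul_I]
  simp_rw [h4]
  have := Real.pi_pos
  rw [smul_eq_mul]
  field_simp

lemma circleAverage_radial (φ : ℝ → ℝ) (g : ℂ → ℝ) {r : ℝ} (hr : 0 < r) :
    circleAverage (fun z => φ ‖z‖ * g z) 0 r = φ r * circleAverage g 0 r := by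
  simp only [circleAverage_def, smul_eq_mul]
  have : ∀ θ, ‖circleMap 0 r θ‖ = r := fun θ => by simp [abs_of_pos hr]
  simp_rw [this]
  rw [intervalIntegral.integral_const_mul]; ring

lemma tendsto_inv_one_add_sq : Tendsto (fun r : ℝ => (1 + r^2)⁻¹) atTop (nhds 0) :=
  tendsto_inv_atTop_zero.comp (tendsto_atTop_add_const_left _ _ (tendsto_pow_atTop two_ne_zero))

lemma rad_m : IntegrableOn (fun r : ℝ => 2 * r / (1+r^2)^2) (Set.Ioi 0) ∧
    ∫ r in Set.Ioi (0:ℝ), 2 * r / (1+r^2)^2 = 1 := by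
  have hd : ∀ x ∈ Set.Ici (0:ℝ), HasDerivAt (fun r : ℝ => -(1+r^2)⁻¹) (2 * x / (1+x^2)^2) x := by
    intro x _
    have h1 : HasDerivAt (fun r : ℝ => 1 + r^2) (2*x) x := by
      simpa using (hasDerivAt_pow 2 x).const_add 1
    refine (h1.inv (by positivity)).neg.congr_deriv ?_
    ring
  have hp : ∀ x ∈ Set.Ioi (0:ℝ), 0 ≤ 2 * x / (1+x^2)^2 := by
    intro x hx
    have : 0 < x := hx
    positivity
  have hl : Tendsto (fun r : ℝ => -(1+r^2)⁻¹) atTop (nhds 0) := by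
    simpa using tendsto_inv_one_add_sq.neg
  refine ⟨integrableOn_Ioi_deriv_of_nonneg' hd hp hl, ?_⟩
  rw [integral_Ioi_of_hasDerivAt_of_nonneg' hd hp hl]; simp

lemma tendsto_log_div : Tendsto (fun r : ℝ => Real.log (1+r^2) * (1 + r^2)⁻¹) atTop (nhds 0) := by
  have h1 : Tendsto (fun r : ℝ => 1 + r^2) atTop atTop :=
    (tendsto_atTop_add_const_left _ _ (tendsto_pow_atTop two_ne_zero))
  have h2 : Tendsto (fun t : ℝ => Real.log t * t⁻¹) atTop (nhds 0) := by
    have := Real.isLittleO_log_id_atTop.tendsto_div_nhds_zero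
    simpa [div_eq_mul_inv] using this
  exact h2.comp h1

lemma rad_L : IntegrableOn (fun r : ℝ => 2 * r / (1+r^2)^2 * Real.log (1+r^2)) (Set.Ioi 0) ∧
    ∫ r in Set.Ioi (0:ℝ), 2 * r / (1+r^2)^2 * Real.log (1+r^2) = 1 := by
  have hd : ∀ x ∈ Set.Ici (0:ℝ), HasDerivAt (fun r : ℝ => -(Real.log (1+r^2) * (1+r^2)⁻¹ + (1+r^2)⁻¹))
      (2 * x / (1+x^2)^2 * Real.log (1+x^2)) x := by
    intro x _
    have h1 : HasDerivAt (fun r : ℝ => 1 + r^2) (2*x) x := by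
      simpa using (hasDerivAt_pow 2 x).const_add 1
    have h0 : (1 + x^2) ≠ 0 := by positivity
    refine (((h1.log h0).mul (h1.inv h0)).add (h1.inv h0)).neg.congr_deriv ?_
    simp only [Pi.inv_apply]
    field_simp
    ring
  have hp : ∀ x ∈ Set.Ioi (0:ℝ), 0 ≤ 2 * x / (1+x^2)^2 * Real.log (1+x^2) := by
    intro x hx
    have : 0 < x := hx
    have : 0 ≤ Real.log (1+x^2) := Real.log_nonneg (by nlinarith [sq_nonneg x])
    positivity
  have hl : Tendsto (fun r : ℝ => -(Real.log (1+r^2) * (1+r^2)⁻¹ + (1+r^2)⁻¹)) atTop (nhds 0) := by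
    simpa using (tendsto_log_div.add tendsto_inv_one_add_sq).neg
  refine ⟨integrableOn_Ioi_deriv_of_nonneg' hd hp hl, ?_⟩
  rw [integral_Ioi_of_hasDerivAt_of_nonneg' hd hp hl]; simp

lemma cont_rlog : Continuous (fun r : ℝ => 2 / (1+r^2)^2 * (r * Real.log r)) :=
  (Continuous.div continuous_const (by fun_prop) fun z => by positivity).mul Real.continuous_mul_log

lemma hasDeriv_G {x : ℝ} (hx : 0 < x) :
    HasDerivAt (fun r : ℝ => r / (1+r^2) * (r * Real.log r) - Real.log (1+r^2)/2)
      (2 / (1+x^2)^2 * (x * Real.log x)) x := by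
  have h1 : HasDerivAt (fun r : ℝ => 1 + r^2) (2*x) x := by
    simpa using (hasDerivAt_pow 2 x).const_add 1
  have h0 : (1 + x^2) ≠ 0 := by positivity
  have h2 := ((((hasDerivAt_id x).div h1 h0).mul ((hasDerivAt_id x).mul (Real.hasDerivAt_log hx.ne')))).sub
    ((h1.log h0).div_const 2)
  refine h2.congr_deriv ?_
  simp
  field_simp
  ring

lemma cont_G : Continuous (fun r : ℝ => r / (1+r^2) * (r * Real.log r) - Real.log (1+r^2)/2) := by
  refine Continuous.sub (Continuous.mul (Continuous.div continuous_id (by fun_prop) fun z => by positivity)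
    Real.continuous_mul_log) (Continuous.div_const (Continuous.log (by fun_prop) fun z => by positivity) _)

lemma rad_log : IntegrableOn (fun r : ℝ => 2 / (1+r^2)^2 * (r * Real.log r)) (Set.Ioi 0) ∧
    ∫ r in Set.Ioi (0:ℝ), 2 / (1+r^2)^2 * (r * Real.log r) = 0 := by
  have hl : Tendsto (fun r : ℝ => r / (1+r^2) * (r * Real.log r) - Real.log (1+r^2)/2) atTop (nhds 0) := by
    have e : (fun r : ℝ => -(Real.log r * (1+r^2)⁻¹) - Real.log (1 + (r^2)⁻¹)/2) =ᶠ[atTop]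
        (fun r : ℝ => r / (1+r^2) * (r * Real.log r) - Real.log (1+r^2)/2) := by
      filter_upwards [eventually_gt_atTop 0] with r hr
      have : 1 + (r^2)⁻¹ = (1+r^2)/r^2 := by field_simp; ring
      rw [this, Real.log_div (by positivity) (by positivity), Real.log_pow]
      push_cast
      field_simp
      ring
    refine Tendsto.congr' e ?_
    have t1 : Tendsto (fun r : ℝ => Real.log r * (1+r^2)⁻¹) atTop (nhds 0) := by
      refine squeeze_zero' ?_ ?_ tendsto_log_div
      · filter_upwards [eventually_ge_atTop 1] with r hr
        have := Real.log_nonneg hr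
        positivity
      · filter_upwards [eventually_ge_atTop 1] with r hr
        gcongr
        nlinarith
    have t2 : Tendsto (fun r : ℝ => Real.log (1 + (r^2)⁻¹)) atTop (nhds 0) := by
      have : Tendsto (fun r : ℝ => 1 + (r^2)⁻¹) atTop (nhds (1+0)) :=
        (tendsto_inv_atTop_zero.comp (tendsto_pow_atTop two_ne_zero)).const_add 1
      rw [add_zero] at this
      have h := (Real.continuousAt_log one_ne_zero).tendsto.comp this
      rw [Real.log_one] at h
      exact h
    simpa using t1.neg.sub (t2.div_const 2)
  have hI : IntegrableOn (fun r : ℝ => 2 / (1+r^2)^2 * (r * Real.log r)) (Set.Ioi 0) := by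
    rw [← Set.Ioc_union_Ioi_eq_Ioi (zero_le_one (α := ℝ))]
    refine IntegrableOn.union ?_ ?_
    · exact (cont_rlog.continuousOn.integrableOn_Icc).mono_set Set.Ioc_subset_Icc_self
    · refine integrableOn_Ioi_deriv_of_nonneg' (fun x hx => hasDeriv_G (lt_of_lt_of_le one_pos hx)) ?_ hl
      intro x hx
      have h1 : 1 < x := hx
      have := Real.log_nonneg h1.le
      positivity
  refine ⟨hI, ?_⟩
  rw [integral_Ioi_of_hasDerivAt_of_tendsto cont_G.continuousWithinAt (fun x hx => hasDeriv_G hx) hI hl]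
  simp

lemma rad_poslog {A : ℝ} (hA : 0 ≤ A) :
    IntegrableOn (fun r : ℝ => 2 * r / (1+r^2)^2 * Real.posLog (r⁻¹ * A)) (Set.Ioi 0) ∧
    ∫ r in Set.Ioi (0:ℝ), 2 * r / (1+r^2)^2 * Real.posLog (r⁻¹ * A) = Real.log (1 + A^2) / 2 := by
  rcases hA.eq_or_lt with rfl | hA
  · simp
  set F : ℝ → ℝ := fun r => (2 * r / (1+r^2)^2) * Real.log A - 2 / (1+r^2)^2 * (r * Real.log r)
  have cF : Continuous F := ((Continuous.div (by fun_prop) (by fun_prop) fun z => by positivity).mul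
    continuous_const).sub cont_rlog
  have e1 : Set.EqOn (fun r : ℝ => 2 * r / (1+r^2)^2 * Real.posLog (r⁻¹ * A)) F (Set.Ioc 0 A) := by
    intro r hr
    have h0 : 0 < r := hr.1
    have h1 : 1 ≤ r⁻¹ * A := by
      rw [inv_mul_eq_div, one_le_div h0]; exact hr.2
    simp only [F]
    rw [Real.posLog_eq_log (by rw [abs_of_pos (by positivity)]; exact h1),
      Real.log_mul (by positivity) hA.ne', Real.log_inv]
    ring
  have e2 : Set.EqOn (fun r : ℝ => 2 * r / (1+r^2)^2 * Real.posLog (r⁻¹ * A)) (fun _ => 0) (Set.Ioi A) := by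
    intro r hr
    have h0 : 0 < r := hA.trans hr
    have h1 : r⁻¹ * A ≤ 1 := by
      rw [inv_mul_eq_div, div_le_one h0]; exact (le_of_lt hr)
    simp only
    rw [(Real.posLog_eq_zero_iff _).2 (by rw [abs_of_pos (by positivity)]; exact h1), mul_zero]
  have i1 : IntegrableOn (fun r : ℝ => 2 * r / (1+r^2)^2 * Real.posLog (r⁻¹ * A)) (Set.Ioc 0 A) :=
    ((cF.continuousOn.integrableOn_Icc).mono_set Set.Ioc_subset_Icc_self).congr_fun e1.symm measurableSet_Ioc
  have i2 : IntegrableOn (fun r : ℝ => 2 * r / (1+r^2)^2 * Real.posLog (r⁻¹ * A)) (Set.Ioi A) :=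
    integrableOn_zero.congr_fun e2.symm measurableSet_Ioi
  rw [← Set.Ioc_union_Ioi_eq_Ioi hA.le]
  refine ⟨i1.union i2, ?_⟩
  rw [setIntegral_union (Set.Ioc_disjoint_Ioi le_rfl) measurableSet_Ioi i1 i2,
    setIntegral_congr_fun measurableSet_Ioc e1, setIntegral_congr_fun measurableSet_Ioi e2,
    ← intervalIntegral.integral_of_le hA.le]
  have hc : Continuous (fun r : ℝ => -(1+r^2)⁻¹ * Real.log A - (r / (1+r^2) * (r * Real.log r) - Real.log (1+r^2)/2)) :=
    (((Continuous.inv₀ (by fun_prop) fun z => by positivity).neg).mul continuous_const).sub cont_G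
  rw [intervalIntegral.integral_eq_sub_of_hasDerivAt_of_le hA.le hc.continuousOn (f' := F) _
    (cF.intervalIntegrable _ _)]
  · simp
    field_simp
    ring
  · intro x hx
    have h1 : HasDerivAt (fun r : ℝ => 1 + r^2) (2*x) x := by
      simpa using (hasDerivAt_pow 2 x).const_add 1
    refine ((((h1.inv (by positivity)).neg).mul_const (Real.log A)).sub (hasDeriv_G hx.1)).congr_deriv ?_
    simp only [F]
    ring


lemma radial_integrable (φ : ℝ → ℝ) (h : IntegrableOn (fun r : ℝ => r * φ r) (Set.Ioi 0)) :
    Integrable (fun z : ℂ => φ ‖z‖) := by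
  have := integrable_fun_norm_addHaar (volume : Measure ℂ) (f := φ)
  rw [Complex.finrank_real_complex] at this
  rw [this]
  simpa using h

lemma radial_integral (φ : ℝ → ℝ) :
    ∫ z : ℂ, φ ‖z‖ = 2 * π * ∫ r in Set.Ioi (0:ℝ), r * φ r := by
  have := integral_fun_norm_addHaar (volume : Measure ℂ) φ
  rw [Complex.finrank_real_complex] at this
  rw [this]
  simp [Measure.real, Complex.volume_ball]
  ring

lemma mV_int : Integrable mV := by
  refine radial_integrable (fun r => 1 / (π * (1+r^2)^2)) ?_
  refine (rad_m.1.const_mul (1/(2*π))).congr (Eventually.of_forall fun r => ?_)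
  have := Real.pi_pos
  simp only; field_simp

lemma mV_integral : ∫ z, mV z = 1 := by
  have h := radial_integral (fun r => 1 / (π * (1+r^2)^2))
  have h2 : ∫ r in Set.Ioi (0:ℝ), r * (1 / (π * (1+r^2)^2)) = 1/(2*π) := by
    refine Eq.trans ?_ ((congrArg (fun y => 1/(2*π) * y) rad_m.2).trans (mul_one _))
    rw [← integral_const_mul]
    refine integral_congr_ae (Eventually.of_forall fun r => ?_)
    have := Real.pi_pos
    simp only; field_simp
  rw [h2] at h
  refine Eq.trans h ?_
  have := Real.pi_pos
  field_simp

lemma mVL_int : Integrable (fun z => mV z * LV z) := by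
  refine radial_integrable (fun r => 1 / (π * (1+r^2)^2) * Real.log (1+r^2)) ?_
  refine (rad_L.1.const_mul (1/(2*π))).congr (Eventually.of_forall fun r => ?_)
  have := Real.pi_pos
  simp only; field_simp

lemma mVL_integral : ∫ z, mV z * LV z = 1 := by
  have h := radial_integral (fun r => 1 / (π * (1+r^2)^2) * Real.log (1+r^2))
  have h2 : ∫ r in Set.Ioi (0:ℝ), r * (1 / (π * (1+r^2)^2) * Real.log (1+r^2)) = 1/(2*π) := by
    refine Eq.trans ?_ ((congrArg (fun y => 1/(2*π) * y) rad_L.2).trans (mul_one _))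
    rw [← integral_const_mul]
    refine integral_congr_ae (Eventually.of_forall fun r => ?_)
    have := Real.pi_pos
    simp only; field_simp
  rw [h2] at h
  refine Eq.trans h ?_
  have := Real.pi_pos
  field_simp

/-- local part of the logarithm -/
noncomputable def Dlog (w : ℂ) : ℝ := |(Metric.ball (0:ℂ) 1).indicator (fun w => Real.log ‖w‖) w|

lemma Dlog_meas : Measurable Dlog := by
  unfold Dlog
  have : Measurable ((Metric.ball (0:ℂ) 1).indicator (fun w => Real.log ‖w‖)) :=
    (Real.measurable_log.comp measurable_norm).indicator measurableSet_ball
  exact continuous_abs.measurable.comp this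

lemma Dlog_nonneg (w : ℂ) : 0 ≤ Dlog w := abs_nonneg _

lemma Dlog_int : Integrable Dlog := by
  refine Integrable.abs ?_
  rw [integrable_indicator_iff measurableSet_ball]
  have := integrableOn_fun_norm_addHaar (volume : Measure ℂ) (f := Real.log) (r := 1)
  rw [this, Complex.finrank_real_complex]
  simp only [Nat.add_one_sub_one, pow_one, smul_eq_mul]
  exact (Real.continuous_mul_log.continuousOn.integrableOn_Icc).mono_set Set.Ioo_subset_Icc_self

lemma norm_sub_sq_le (z a : ℂ) : ‖z - a‖^2 ≤ (1 + ‖z‖^2) * (1 + ‖a‖^2) := by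
  have h := norm_sub_le z a
  have h2 : ‖z - a‖^2 ≤ (‖z‖ + ‖a‖)^2 := by gcongr
  nlinarith [sq_nonneg (‖z‖ * ‖a‖ - 1)]

lemma abs_log_le (z a : ℂ) :
    |Real.log ‖z - a‖| ≤ Dlog (z - a) + (LV z + LV a) / 2 := by
  by_cases h : ‖z - a‖ < 1
  · have : Dlog (z - a) = |Real.log ‖z - a‖| := by
      unfold Dlog; rw [Set.indicator_of_mem (by simpa using h)]
    rw [this]; linarith [LV_nonneg z, LV_nonneg a]
  · have h1 : 1 ≤ ‖z - a‖ := not_lt.1 h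
    rw [abs_of_nonneg (Real.log_nonneg h1)]
    have h2 := Real.log_le_log (by positivity) (norm_sub_sq_le z a)
    rw [Real.log_pow, Real.log_mul (by positivity) (by positivity)] at h2
    have := Dlog_nonneg (z - a)
    unfold LV
    push_cast at h2
    linarith

lemma log_meas (a : ℂ) : Measurable (fun z : ℂ => Real.log ‖z - a‖) :=
  Real.measurable_log.comp (measurable_norm.comp (measurable_id.sub_const a))

lemma mVlog_int (a : ℂ) : Integrable (fun z => mV z * Real.log ‖z - a‖) := by
  have hd : Integrable (fun z => Dlog (z - a) + (mV z * LV z + LV a * mV z) / 2) :=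
    (Dlog_int.comp_sub_right a).add ((mVL_int.add (mV_int.const_mul _)).div_const 2)
  refine hd.mono' (mV_cont.measurable.mul (log_meas a)).aestronglyMeasurable
    (Eventually.of_forall fun z => ?_)
  rw [Real.norm_eq_abs, abs_mul, abs_of_pos (mV_pos z)]
  have h1 := abs_log_le z a
  have h2 := mul_le_mul_of_nonneg_left h1 (mV_pos z).le
  have h3 := mul_le_mul_of_nonneg_right (mV_le_one z) (Dlog_nonneg (z - a))
  nlinarith

lemma mVlog_integral (a : ℂ) : ∫ z, mV z * Real.log ‖z - a‖ = LV a / 2 := by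
  rw [polar_integral (fun z => mV z * Real.log ‖z - a‖) (mV_cont.measurable.mul (log_meas a)) (mVlog_int a)]
  have h1 : ∀ r ∈ Set.Ioi (0:ℝ), 2 * π * r * circleAverage (fun z => mV z * Real.log ‖z - a‖) 0 r
      = 2 / (1+r^2)^2 * (r * Real.log r) + 2 * r / (1+r^2)^2 * Real.posLog (r⁻¹ * ‖a‖) := by
    intro r hr
    have hr0 : 0 < r := hr
    have h2 := circleAverage_radial (fun r => 1 / (π * (1+r^2)^2)) (fun z => Real.log ‖z - a‖) hr0
    have h3 := circleAverage_log_norm_sub_const_eq_log_radius_add_posLog (a := a) (c := 0) hr0.ne'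
    unfold mV
    rw [h2, h3]
    have := Real.pi_pos
    simp only [zero_sub, norm_neg]
    field_simp
  rw [setIntegral_congr_fun measurableSet_Ioi h1,
    integral_add rad_log.1 (rad_poslog (norm_nonneg a)).1, rad_log.2, (rad_poslog (norm_nonneg a)).2]
  unfold LV; ring

/-- scaled and translated density -/
noncomputable def ms (s : ℝ) (b z : ℂ) : ℝ := s / (π * (s + ‖z - b‖^2)^2)

lemma ms_nonneg {s : ℝ} (hs : 0 < s) (b z : ℂ) : 0 ≤ ms s b z := by unfold ms; positivity
lemma ms_cont {s : ℝ} (hs : 0 < s) (b : ℂ) : Continuous (ms s b) := by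
  unfold ms
  refine Continuous.div continuous_const (by fun_prop) fun z => by positivity

lemma ms_le {s : ℝ} (hs : 0 < s) (b : ℂ) : ∃ C, 0 ≤ C ∧ ∀ z, ms s b z ≤ C * mV z := by
  set c := (1 + 2*‖b‖^2)/s + 2 with hc
  refine ⟨s * c^2, by positivity, fun z => ?_⟩
  have h1 : 1 + ‖z‖^2 ≤ c * (s + ‖z - b‖^2) := by
    have h := norm_add_le (z - b) b
    rw [sub_add_cancel] at h
    have h2 : ‖z‖^2 ≤ (‖z - b‖ + ‖b‖)^2 := by gcongr
    have h3 : c * (s + ‖z - b‖^2) = 1 + 2*‖b‖^2 + 2 * s + (1+2*‖b‖^2)/s * ‖z-b‖^2 + 2*‖z-b‖^2 := by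
      rw [hc]; field_simp; ring
    have h4 : 0 ≤ (1+2*‖b‖^2)/s * ‖z-b‖^2 := by positivity
    rw [h3]
    nlinarith [sq_nonneg (‖z - b‖ - ‖b‖)]
  unfold ms mV
  rw [mul_one_div, div_le_div_iff₀ (by positivity) (by positivity)]
  have h5 : (1 + ‖z‖^2)^2 ≤ (c * (s + ‖z - b‖^2))^2 := by gcongr
  have := Real.pi_pos
  calc s * (π * (1+‖z‖^2)^2) ≤ s * (π * (c * (s + ‖z - b‖^2))^2) := by gcongr
    _ = _ := by ring

lemma scale_integral {t : ℝ} (ht : 0 < t) (b : ℂ) (g : ℂ → ℝ) :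
    ∫ z, g z = t^2 * ∫ w : ℂ, g (t • w + b) := by
  have h := Measure.integral_comp_smul (volume : Measure ℂ) (fun z => g (z + b)) t
  rw [integral_add_right_eq_self (μ := (volume : Measure ℂ)) g b] at h
  rw [h, Complex.finrank_real_complex, abs_of_pos (by positivity), smul_eq_mul]
  field_simp

lemma ms_scale {t : ℝ} (ht : 0 < t) (b w : ℂ) : t^2 * ms (t^2) b (t • w + b) = mV w := by
  unfold ms mV
  rw [add_sub_cancel_right, norm_smul, Real.norm_eq_abs, abs_of_pos ht]
  have := Real.pi_pos
  field_simp

lemma ms_integral {s : ℝ} (hs : 0 < s) (b : ℂ) : ∫ z, ms s b z = 1 := by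
  obtain ⟨t, ht, rfl⟩ : ∃ t, 0 < t ∧ s = t^2 := ⟨√s, Real.sqrt_pos.2 hs, (Real.sq_sqrt hs.le).symm⟩
  rw [scale_integral ht b, ← integral_const_mul]
  simp_rw [ms_scale ht]
  exact mV_integral

lemma mslog_integral {s : ℝ} (hs : 0 < s) (a b : ℂ) :
    ∫ z, ms s b z * Real.log ‖z - a‖ = Real.log (s + ‖a - b‖^2) / 2 := by
  obtain ⟨t, ht, rfl⟩ : ∃ t, 0 < t ∧ s = t^2 := ⟨√s, Real.sqrt_pos.2 hs, (Real.sq_sqrt hs.le).symm⟩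
  rw [scale_integral ht b, ← integral_const_mul]
  set c : ℂ := t⁻¹ • (a - b) with hc
  have hac : a = t • c + b := by rw [hc, smul_inv_smul₀ ht.ne']; ring
  have e : (fun w : ℂ => t^2 * (ms (t^2) b (t • w + b) * Real.log ‖t • w + b - a‖)) =ᵐ[volume]
      fun w => mV w * Real.log t + mV w * Real.log ‖w - c‖ := by
    have : ∀ᵐ w : ℂ, w ≠ c := by
      have : (volume : Measure ℂ) {c} = 0 := by simp
      exact compl_mem_ae_iff.2 this
    filter_upwards [this] with w hw
    rw [← mul_assoc, ms_scale ht]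
    have h1 : t • w + b - a = t • (w - c) := by rw [hac, smul_sub]; ring
    rw [h1, norm_smul, Real.norm_eq_abs, abs_of_pos ht, Real.log_mul ht.ne'
      (norm_ne_zero_iff.2 (sub_ne_zero.2 hw))]
    ring
  rw [integral_congr_ae e, integral_add (mV_int.mul_const _) (mVlog_int c), integral_mul_const,
    mV_integral, mVlog_integral]
  have h2 : a - b = t • c := by rw [hac]; ring
  clear_value c
  unfold LV
  rw [h2, norm_smul, Real.norm_eq_abs, abs_of_pos ht]
  have : t^2 + (t * ‖c‖)^2 = t^2 * (1 + ‖c‖^2) := by ring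
  rw [this, Real.log_mul (by positivity) (by positivity), Real.log_pow]
  push_cast; ring

lemma ms_int {s : ℝ} (hs : 0 < s) (b : ℂ) : Integrable (ms s b) := by
  obtain ⟨C, hC, h⟩ := ms_le hs b
  refine (mV_int.const_mul C).mono' (ms_cont hs b).aestronglyMeasurable (Eventually.of_forall fun z => ?_)
  rw [Real.norm_eq_abs, abs_of_nonneg (ms_nonneg hs b z)]; exact h z

lemma ms_mul_int {s : ℝ} (hs : 0 < s) (b : ℂ) (g : ℂ → ℝ) (hg : Measurable g)
    (hi : Integrable (fun z => mV z * g z)) : Integrable (fun z => ms s b z * g z) := by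
  obtain ⟨C, hC, h⟩ := ms_le hs b
  refine (hi.norm.const_mul C).mono' ((ms_cont hs b).measurable.mul hg).aestronglyMeasurable
    (Eventually.of_forall fun z => ?_)
  rw [norm_mul, norm_mul, Real.norm_of_nonneg (ms_nonneg hs b z), Real.norm_of_nonneg (mV_pos z).le,
    ← mul_assoc]
  gcongr
  exact h z

/-- symmetric energy identity through Fubini -/
lemma ms_fubini {s : ℝ} (hs : 0 < s) (b : ℂ) :
    ∫ z, ms s b z * (LV z / 2) = ∫ a, mV a * (Real.log (s + ‖a - b‖^2) / 2) := by
  have hI : Integrable (fun p : ℂ × ℂ => ms s b p.1 * (mV p.2 * Real.log ‖p.1 - p.2‖))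
      ((volume : Measure ℂ).prod volume) := by
    have h1 : Integrable (fun p : ℂ × ℂ => ms s b p.2 * Dlog (p.1 - p.2))
        ((volume : Measure ℂ).prod volume) :=
      (ms_int hs b).convolution_integrand (ContinuousLinearMap.mul ℝ ℝ) Dlog_int
    have h1' := h1.swap
    have h2 := (ms_mul_int hs b LV LV_cont.measurable mVL_int).mul_prod mV_int
    have h3 := (ms_int hs b).mul_prod mVL_int
    have hneg : ∀ w, Dlog (-w) = Dlog w := by intro w; simp [Dlog, Set.indicator]
    refine (h1'.add ((h2.add h3).div_const 2)).mono' ?_ (Eventually.of_forall fun p => ?_)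
    · refine Measurable.aestronglyMeasurable ?_
      refine ((ms_cont hs b).measurable.comp measurable_fst).mul
        ((mV_cont.measurable.comp measurable_snd).mul ?_)
      exact Real.measurable_log.comp (measurable_norm.comp (measurable_fst.sub measurable_snd))
    · simp only [Function.comp, Prod.fst_swap, Prod.snd_swap, Pi.add_apply]
      rw [norm_mul, norm_mul, Real.norm_of_nonneg (ms_nonneg hs b _), Real.norm_of_nonneg (mV_pos _).le,
        Real.norm_eq_abs, ← hneg, neg_sub]
      have h4 := abs_log_le p.1 p.2
      have h5 := mul_le_mul_of_nonneg_left h4 (mV_pos p.2).le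
      have h6 := mul_le_mul_of_nonneg_right (mV_le_one p.2) (Dlog_nonneg (p.1 - p.2))
      have h7 : mV p.2 * |Real.log ‖p.1 - p.2‖| ≤
        Dlog (p.1 - p.2) + (LV p.1 * mV p.2 + mV p.2 * LV p.2)/2 := by nlinarith
      have h8 := mul_le_mul_of_nonneg_left h7 (ms_nonneg hs b p.1)
      refine h8.trans (le_of_eq ?_)
      ring
  have h1 := integral_integral_swap (f := fun z a => ms s b z * (mV a * Real.log ‖z - a‖)) hI
  have e1 : ∀ z : ℂ, ∫ a, ms s b z * (mV a * Real.log ‖z - a‖) = ms s b z * (LV z / 2) := by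
    intro z
    rw [integral_const_mul]
    simp_rw [norm_sub_rev z]
    rw [mVlog_integral]
  have e2 : ∀ a : ℂ, ∫ z, ms s b z * (mV a * Real.log ‖z - a‖) = mV a * (Real.log (s + ‖a - b‖^2) / 2) := by
    intro a
    rw [← mslog_integral hs, ← integral_const_mul]
    refine integral_congr_ae (Eventually.of_forall fun z => ?_)
    simp only; ring
  simp_rw [e1, e2] at h1
  exact h1


/-- second difference kernel -/
noncomputable def Ks (s : ℝ) (w : ℂ) : ℝ :=
  Real.log (s + ‖w‖^2) - Real.log (s/2 + ‖w‖^2) / 2 - Real.log (3*s/2 + ‖w‖^2) / 2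

lemma Ks_cont {s : ℝ} (hs : 0 < s) : Continuous (Ks s) := by
  unfold Ks
  refine ((Continuous.log (by fun_prop) fun z => by positivity).sub
    ((Continuous.log (by fun_prop) fun z => by positivity).div_const 2)).sub
    ((Continuous.log (by fun_prop) fun z => by positivity).div_const 2)

lemma Ks_neg (s : ℝ) (w : ℂ) : Ks s (-w) = Ks s w := by simp [Ks]

lemma Ks_eq {s : ℝ} (hs : 0 < s) (w : ℂ) :
    Ks s w = Real.log ((s + ‖w‖^2)^2 / ((s + ‖w‖^2)^2 - s^2/4)) / 2 := by
  have h : (s + ‖w‖^2)^2 - s^2/4 = (s/2 + ‖w‖^2) * (3*s/2 + ‖w‖^2) := by ring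
  unfold Ks
  rw [h, Real.log_div (by positivity) (by positivity), Real.log_pow,
    Real.log_mul (by positivity) (by positivity)]
  push_cast; ring

lemma Ks_le {s : ℝ} (hs : 0 < s) (w : ℂ) : Ks s w ≤ s * ms s 0 w := by
  rw [Ks_eq hs]
  set q := (s + ‖w‖^2)^2 with hq
  have hq1 : s^2 ≤ q := by rw [hq]; gcongr; nlinarith [sq_nonneg ‖w‖]
  have hs2 : 0 < s^2 := by positivity
  have hq2 : 3/4 * q ≤ q - s^2/4 := by linarith
  have hq0 : 0 < q := by linarith
  have hq3 : 0 < q - s^2/4 := by linarith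
  have h1 := Real.log_le_sub_one_of_pos (div_pos hq0 hq3)
  have h2 : q / (q - s^2/4) - 1 = (s^2/4) / (q - s^2/4) := by
    rw [div_sub_one hq3.ne']; congr 1; ring
  have h3 : (s^2/4) / (q - s^2/4) ≤ (s^2/4) / (3/4*q) := by gcongr
  have h4 : ms s 0 w = s / (π * q) := by simp [ms, hq]
  rw [h4]
  have h5 : s^2 / (4 * q) ≤ s * (s / (π * q)) := by
    have := Real.pi_le_four
    have := Real.pi_pos
    rw [← mul_div_assoc, ← pow_two]
    gcongr
  have h6 : (s^2/4) / (3/4*q) = s^2/(4*q) * (4/3) := by field_simp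
  have h7 : 0 ≤ s^2 / (4*q) := by positivity
  rw [h2] at h1
  linarith

lemma Ks_ge {s : ℝ} (hs : 0 < s) (w : ℂ) : s/4 * ms s 0 w ≤ Ks s w := by
  rw [Ks_eq hs]
  set q := (s + ‖w‖^2)^2 with hq
  have hq1 : s^2 ≤ q := by rw [hq]; gcongr; nlinarith [sq_nonneg ‖w‖]
  have hs2 : 0 < s^2 := by positivity
  have hq0 : 0 < q := by linarith
  have hq3 : 0 < q - s^2/4 := by linarith
  have h1 := Real.one_sub_inv_le_log_of_pos (div_pos hq0 hq3)
  have h2 : 1 - (q / (q - s^2/4))⁻¹ = s^2/(4*q) := by field_simp; ring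
  have h4 : ms s 0 w = s / (π * q) := by simp [ms, hq]
  rw [h4]
  rw [h2] at h1
  have h5 : s/4 * (s / (π * q)) ≤ s^2/(4*q) / 2 := by
    have h6 : s/4 * (s / (π * q)) = s^2/(4*q) * (1/π) := by field_simp
    rw [h6, div_eq_mul_one_div (s^2/(4*q)) 2]
    have := Real.pi_gt_three
    gcongr
    linarith
  linarith

lemma Ks_nonneg {s : ℝ} (hs : 0 < s) (w : ℂ) : 0 ≤ Ks s w :=
  le_trans (mul_nonneg (by positivity) (ms_nonneg hs 0 w)) (Ks_ge hs w)

lemma Ks_int {s : ℝ} (hs : 0 < s) : Integrable (Ks s) := by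
  refine ((ms_int hs 0).const_mul s).mono' (Ks_cont hs).aestronglyMeasurable
    (Eventually.of_forall fun z => ?_)
  rw [Real.norm_of_nonneg (Ks_nonneg hs z)]; exact Ks_le hs z

lemma Ks_integral_ge {s : ℝ} (hs : 0 < s) : s/4 ≤ ∫ w, Ks s w := by
  have := integral_mono ((ms_int hs 0).const_mul (s/4)) (Ks_int hs) (fun w => Ks_ge hs w)
  rw [integral_const_mul, ms_integral hs, mul_one] at this
  exact this

lemma norm_mV_int : Integrable (fun w : ℂ => mV w * ‖w‖) := by
  have h := integrable_rpow_neg_one_add_norm_sq (E := ℂ) (μ := volume) (r := 3)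
    (by rw [Complex.finrank_real_complex]; norm_num)
  refine h.mono' (mV_cont.mul continuous_norm).aestronglyMeasurable (Eventually.of_forall fun z => ?_)
  rw [Real.norm_of_nonneg (mul_nonneg (mV_pos z).le (norm_nonneg z))]
  have hp : 0 < 1 + ‖z‖^2 := by positivity
  have h1 : (1 + ‖z‖^2) ^ (-(3:ℝ)/2) = (1 + ‖z‖^2) ^ (1/2 : ℝ) * ((1 + ‖z‖^2)^2)⁻¹ := by
    rw [← Real.rpow_natCast (1 + ‖z‖^2) 2, ← Real.rpow_neg hp.le, ← Real.rpow_add hp]; norm_num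
  rw [h1, ← Real.sqrt_eq_rpow, mul_comm]
  have h2 : ‖z‖ ≤ √(1 + ‖z‖^2) := Real.le_sqrt_of_sq_le (by linarith)
  have h3 : mV z ≤ ((1 + ‖z‖^2)^2)⁻¹ := by
    unfold mV
    rw [one_div]
    have := Real.pi_gt_three
    gcongr
    nlinarith [sq_nonneg (1 + ‖z‖^2)]
  have := (mV_pos z).le
  gcongr

lemma norm_ms {s : ℝ} (hs : 0 < s) :
    ∫ w, ms s 0 w * ‖w‖ = √s * ∫ w, mV w * ‖w‖ := by
  have ht := Real.sqrt_pos.2 hs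
  rw [scale_integral ht 0, ← integral_const_mul, ← integral_const_mul]
  refine integral_congr_ae (Eventually.of_forall fun w => ?_)
  simp only
  rw [← mul_assoc]
  have := ms_scale ht 0 w
  rw [Real.sq_sqrt hs.le] at this ⊢
  rw [this, add_zero, norm_smul, Real.norm_eq_abs, abs_of_pos ht]; ring

lemma norm_Ks_int {s : ℝ} (hs : 0 < s) : Integrable (fun w => Ks s w * ‖w‖) := by
  have h := ms_mul_int hs 0 (fun w => ‖w‖) measurable_norm norm_mV_int
  refine (h.const_mul s).mono' ((Ks_cont hs).mul continuous_norm).aestronglyMeasurable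
    (Eventually.of_forall fun z => ?_)
  rw [Real.norm_of_nonneg (mul_nonneg (Ks_nonneg hs z) (norm_nonneg z)), ← mul_assoc]
  gcongr
  exact Ks_le hs z

lemma norm_Ks_le {s : ℝ} (hs : 0 < s) :
    ∫ w, Ks s w * ‖w‖ ≤ s * (√s * ∫ w, mV w * ‖w‖) := by
  rw [← norm_ms hs, ← integral_const_mul]
  refine integral_mono (norm_Ks_int hs)
    ((ms_mul_int hs 0 (fun w => ‖w‖) measurable_norm norm_mV_int).const_mul s) fun w => ?_
  simp only [← mul_assoc]
  gcongr
  exact Ks_le hs w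

lemma scheffe (p : ℕ → ℂ → ℝ) (q : ℂ → ℝ) (hp : ∀ n, Integrable (p n)) (hq : Integrable q)
    (hp0 : ∀ n z, 0 ≤ p n z) (hq0 : ∀ z, 0 ≤ q z)
    (hlim : ∀ z, Tendsto (fun n => p n z) atTop (nhds (q z)))
    (heq : ∀ n, ∫ z, p n z = ∫ z, q z)
    (f : ℂ → ℝ) (hf : Continuous f) (B : ℝ) (hB : ∀ z, |f z| ≤ B) :
    Tendsto (fun n => ∫ z, f z * p n z) atTop (nhds (∫ z, f z * q z)) := by
  have hmax : ∀ n, Integrable (fun z => max (q z - p n z) 0) := fun n => (hq.sub (hp n)).pos_part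
  have h1 : Tendsto (fun n => ∫ z, max (q z - p n z) 0) atTop (nhds (∫ _ : ℂ, (0:ℝ))) := by
    refine tendsto_integral_of_dominated_convergence q (fun n => (hmax n).1) hq ?_ ?_
    · intro n
      refine Eventually.of_forall fun z => ?_
      rw [Real.norm_of_nonneg (le_max_right _ _)]
      exact max_le (by linarith [hp0 n z]) (hq0 z)
    · refine Eventually.of_forall fun z => ?_
      have : Tendsto (fun n => max (q z - p n z) 0) atTop (nhds (max (q z - q z) 0)) :=
        (tendsto_const_nhds.sub (hlim z)).max tendsto_const_nhds
      simpa using this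
  rw [integral_zero] at h1
  have h2 : ∀ n, ∫ z, |p n z - q z| = 2 * ∫ z, max (q z - p n z) 0 := by
    intro n
    have e : ∀ z, |p n z - q z| = 2 * max (q z - p n z) 0 - (q z - p n z) := by
      intro z
      rcases le_total (q z - p n z) 0 with h | h
      · rw [max_eq_right h, abs_of_nonneg (by linarith)]; ring
      · rw [max_eq_left h, abs_of_nonpos (by linarith)]; ring
    simp_rw [e]
    have s1 := integral_sub ((hmax n).const_mul 2) (hq.sub (hp n))
    refine s1.trans ?_
    simp only [Pi.sub_apply]
    rw [integral_const_mul, integral_sub hq (hp n), heq n]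
    ring
  have hfi : ∀ g : ℂ → ℝ, Integrable g → Integrable (fun z => f z * g z) := fun g hg =>
    hg.bdd_mul (c := B) hf.aestronglyMeasurable (Eventually.of_forall fun z => hB z)
  rw [tendsto_iff_norm_sub_tendsto_zero]
  refine squeeze_zero (fun n => norm_nonneg _) (g := fun n => B * (2 * ∫ z, max (q z - p n z) 0)) ?_ ?_
  · intro n
    rw [← integral_sub (hfi _ (hp n)) (hfi _ hq), ← h2, ← integral_const_mul]
    refine (norm_integral_le_integral_norm _).trans ?_
    refine integral_mono ((hfi _ (hp n)).sub (hfi _ hq)).norm (((hp n).sub hq).abs.const_mul B) fun z => ?_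
    simp only
    rw [← mul_sub, norm_mul]
    exact mul_le_mul_of_nonneg_right (hB z) (abs_nonneg _)
  · simpa using (h1.const_mul 2).const_mul B

/-- average over a finite set -/
noncomputable def avgS (S : Finset ℂ) (φ : ℂ → ℝ) : ℝ := (∑ a ∈ S, φ a) / S.card

lemma avgS_add (S : Finset ℂ) (φ ψ : ℂ → ℝ) : avgS S (fun a => φ a + ψ a) = avgS S φ + avgS S ψ := by
  simp [avgS, Finset.sum_add_distrib, add_div]
lemma avgS_sub (S : Finset ℂ) (φ ψ : ℂ → ℝ) : avgS S (fun a => φ a - ψ a) = avgS S φ - avgS S ψ := by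
  simp [avgS, Finset.sum_sub_distrib, sub_div]
lemma avgS_mul (S : Finset ℂ) (c : ℝ) (φ : ℂ → ℝ) : avgS S (fun a => c * φ a) = c * avgS S φ := by
  simp [avgS, ← Finset.mul_sum, mul_div_assoc]
lemma avgS_const {S : Finset ℂ} (hS : S.Nonempty) (c : ℝ) : avgS S (fun _ => c) = c := by
  have : (S.card : ℝ) ≠ 0 := by exact_mod_cast hS.card_pos.ne'
  simp [avgS]; field_simp
lemma avgS_mono (S : Finset ℂ) (φ ψ : ℂ → ℝ) (h : ∀ a, φ a ≤ ψ a) : avgS S φ ≤ avgS S ψ := by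
  unfold avgS; gcongr with a; exact h a
lemma avgS_abs_le {S : Finset ℂ} (hS : S.Nonempty) (φ : ℂ → ℝ) (c : ℝ) (h : ∀ a, |φ a| ≤ c) :
    |avgS S φ| ≤ c := by
  rw [abs_le]
  constructor
  · rw [← avgS_const hS (-c)]; exact avgS_mono _ _ _ fun a => (abs_le.1 (h a)).1
  · conv_rhs => rw [← avgS_const hS c]
    exact avgS_mono _ _ _ fun a => (abs_le.1 (h a)).2
lemma avgS_integrable (S : Finset ℂ) (φ : ℂ → ℂ → ℝ) (h : ∀ a, Integrable (φ a)) :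
    Integrable (fun z => avgS S (fun a => φ a z)) := by
  unfold avgS
  exact (integrable_finsetSum _ fun a _ => h a).div_const _
lemma avgS_integral (S : Finset ℂ) (φ : ℂ → ℂ → ℝ) (h : ∀ a, Integrable (φ a)) :
    ∫ z, avgS S (fun a => φ a z) = avgS S (fun a => ∫ z, φ a z) := by
  unfold avgS
  rw [integral_div, integral_finsetSum _ fun a _ => h a]


lemma avgS_log_int (S : Finset ℂ) : Integrable (fun z => mV z * avgS S (fun a => Real.log ‖z - a‖)) := by
  simp_rw [← avgS_mul]
  exact avgS_integrable S (fun a z => mV z * Real.log ‖z - a‖) mVlog_int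

lemma avgS_log_meas (S : Finset ℂ) : Measurable (fun z => avgS S (fun a => Real.log ‖z - a‖)) := by
  unfold avgS
  refine Measurable.div_const ?_ _
  exact Finset.measurable_fun_sum _ fun a _ => log_meas a

lemma step1 (S : ℕ → Finset ℂ) (κ : ℕ → ℝ)
  (hT : Tendsto (fun n => ∫ z, mV z * |avgS (S n) (fun a => Real.log ‖z - a‖) - LV z / 2 + κ n|)
    atTop (nhds 0)) {s : ℝ} (hs : 0 < s) (b : ℂ) :
    Tendsto (fun n => avgS (S n) (fun a => Real.log (s + ‖a - b‖^2) / 2) + κ n) atTop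
      (nhds (∫ a, mV a * (Real.log (s + ‖a - b‖^2) / 2))) := by
  obtain ⟨C, hC, hle⟩ := ms_le hs b
  rw [tendsto_iff_norm_sub_tendsto_zero]
  refine squeeze_zero (fun n => norm_nonneg _) (g := fun n => C * ∫ z, mV z *
    |avgS (S n) (fun a => Real.log ‖z - a‖) - LV z / 2 + κ n|) ?_ (by simpa using hT.const_mul C)
  intro n
  set h : ℂ → ℝ := fun z => avgS (S n) (fun a => Real.log ‖z - a‖) - LV z / 2 + κ n with hh
  have hmeas : Measurable h :=
    ((avgS_log_meas (S n)).sub (LV_cont.measurable.div_const 2)).add measurable_const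
  have i1 := avgS_log_int (S n)
  have i2 : Integrable (fun z => mV z * (LV z / 2)) :=
    (mVL_int.div_const 2).congr (Eventually.of_forall fun z => by simp only; ring)
  have hIntegr : Integrable (fun z => mV z * h z) := by
    refine ((i1.sub i2).add (mV_int.mul_const (κ n))).congr (Eventually.of_forall fun z => ?_)
    simp only [hh, Pi.add_apply, Pi.sub_apply]; ring
  have j1 := ms_mul_int hs b _ (avgS_log_meas (S n)) i1
  have j2 := ms_mul_int hs b _ (LV_cont.measurable.div_const 2) i2
  have e : ∫ z, ms s b z * h z = avgS (S n) (fun a => Real.log (s + ‖a - b‖^2) / 2) + κ n -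
      ∫ a, mV a * (Real.log (s + ‖a - b‖^2) / 2) := by
    have e1 : (fun z => ms s b z * h z) = fun z => ms s b z * avgS (S n) (fun a => Real.log ‖z - a‖)
        - ms s b z * (LV z / 2) + ms s b z * κ n := by
      ext z; simp only [hh]; ring
    have e2 : ∫ z, ms s b z * avgS (S n) (fun a => Real.log ‖z - a‖) =
        avgS (S n) (fun a => Real.log (s + ‖a - b‖^2) / 2) := by
      simp_rw [← avgS_mul]
      rw [avgS_integral (S n) (fun a z => ms s b z * Real.log ‖z - a‖)
        (fun a => ms_mul_int hs b _ (log_meas a) (mVlog_int a))]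
      simp_rw [mslog_integral hs]
    have s1 := integral_add (j1.sub j2) ((ms_int hs b).mul_const (κ n))
    have s2 := integral_sub j1 j2
    rw [e1]
    refine s1.trans ?_
    simp only [Pi.sub_apply]
    rw [s2, e2, ms_fubini hs, integral_mul_const, ms_integral hs]; ring
  rw [← e, ← integral_const_mul]
  refine (norm_integral_le_integral_norm _).trans ?_
  have hIntegr' : Integrable (fun z => mV z * |h z|) :=
    hIntegr.abs.congr (Eventually.of_forall fun z => by simp [abs_mul, abs_of_pos (mV_pos z)])
  refine integral_mono (ms_mul_int hs b h hmeas hIntegr).norm (hIntegr'.const_mul C) fun z => ?_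
  simp only
  rw [norm_mul, Real.norm_of_nonneg (ms_nonneg hs b z), ← mul_assoc, Real.norm_eq_abs]
  gcongr
  exact hle z

lemma mVlogs_int {s : ℝ} (hs : 0 < s) (b : ℂ) :
    Integrable (fun a => mV a * (Real.log (s + ‖a - b‖^2) / 2)) := by
  -- |log (s + |a-b|²)| ≤ LV a + const
  have hc : Continuous (fun a : ℂ => Real.log (s + ‖a - b‖^2)) :=
    Continuous.log (by fun_prop) fun z => by positivity
  set c := |Real.log s| + Real.log (1 + s) + LV b + Real.log 2 with hcc
  refine (mVL_int.add (mV_int.mul_const c)).mono' (mV_cont.mul (hc.div_const 2)).aestronglyMeasurable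
    (Eventually.of_forall fun a => ?_)
  have h1 : Real.log s ≤ Real.log (s + ‖a-b‖^2) := Real.log_le_log hs (by nlinarith [sq_nonneg ‖a-b‖])
  have h2 : Real.log (s + ‖a-b‖^2) ≤ Real.log (1+s) + LV b + LV a := by
    unfold LV
    rw [← Real.log_mul (by positivity) (by positivity), ← Real.log_mul (by positivity) (by positivity)]
    refine Real.log_le_log (by positivity) ?_
    have := norm_sub_sq_le a b
    have h3 : 0 ≤ ‖a‖^2 := by positivity
    have h4 : 0 ≤ ‖b‖^2 := by positivity
    have h5 : 1 ≤ (1 + ‖a‖^2) * (1+‖b‖^2) := by nlinarith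
    nlinarith
  have h6 := neg_abs_le (Real.log s)
  have h7 : 0 ≤ Real.log (1+s) := Real.log_nonneg (by linarith)
  have h8 : 0 ≤ Real.log 2 := Real.log_nonneg (by norm_num)
  have h9 := LV_nonneg a
  have h10 := LV_nonneg b
  have h11 := abs_nonneg (Real.log s)
  rw [norm_mul, Real.norm_of_nonneg (mV_pos a).le, Pi.add_apply, ← mul_add]
  refine mul_le_mul_of_nonneg_left ?_ (mV_pos a).le
  rw [Real.norm_eq_abs, abs_le]
  constructor <;> linarith

lemma step3 (S : ℕ → Finset ℂ) (κ : ℕ → ℝ)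
  (hT : Tendsto (fun n => ∫ z, mV z * |avgS (S n) (fun a => Real.log ‖z - a‖) - LV z / 2 + κ n|)
    atTop (nhds 0)) {s : ℝ} (hs : 0 < s) (b : ℂ) :
    Tendsto (fun n => avgS (S n) (fun a => Ks s (b - a))) atTop
      (nhds (∫ a, mV a * Ks s (b - a))) := by
  have t1 := step1 S κ hT hs b
  have t2 := step1 S κ hT (s := s/2) (by positivity) b
  have t3 := step1 S κ hT (s := 3*s/2) (by positivity) b
  have t := ((t1.const_mul 2).sub t2).sub t3
  have i1 := mVlogs_int hs b
  have i2 := mVlogs_int (s := s/2) (by positivity) b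
  have i3 := mVlogs_int (s := 3*s/2) (by positivity) b
  have e1 : ∀ n, avgS (S n) (fun a => Ks s (b - a)) =
    2 * (avgS (S n) (fun a => Real.log (s + ‖a - b‖^2) / 2) + κ n) -
    (avgS (S n) (fun a => Real.log (s/2 + ‖a - b‖^2) / 2) + κ n) -
    (avgS (S n) (fun a => Real.log (3*s/2 + ‖a - b‖^2) / 2) + κ n) := by
    intro n
    unfold Ks
    rw [avgS_sub, avgS_sub]
    simp_rw [norm_sub_rev b]
    have h2 : avgS (S n) (fun a => Real.log (s + ‖a - b‖^2)) =
        2 * avgS (S n) (fun a => Real.log (s + ‖a - b‖^2) / 2) := by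
      rw [← avgS_mul]; congr 1; ext a; ring
    rw [h2]
    ring
  have e2 : ∫ a, mV a * Ks s (b - a) = 2 * (∫ a, mV a * (Real.log (s + ‖a - b‖^2) / 2)) -
     (∫ a, mV a * (Real.log (s/2 + ‖a - b‖^2) / 2)) - ∫ a, mV a * (Real.log (3*s/2 + ‖a - b‖^2) / 2) := by
    rw [← integral_const_mul, ← integral_sub (i1.const_mul 2) i2]
    refine Eq.trans ?_ (integral_sub ((i1.const_mul 2).sub i2) i3)
    refine integral_congr_ae (Eventually.of_forall fun a => ?_)
    simp only [Pi.sub_apply]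
    unfold Ks
    rw [norm_sub_rev b]; ring
  simp_rw [e1]
  rw [e2]
  exact t

theorem weak_lip (S : ℕ → Finset ℂ) (κ : ℕ → ℝ) (hS : ∀ n, (S n).Nonempty)
  (hT : Tendsto (fun n => ∫ z, mV z * |avgS (S n) (fun a => Real.log ‖z - a‖) - LV z / 2 + κ n|)
    atTop (nhds 0)) (f : ℂ → ℝ) (B Λ : ℝ) (hB : ∀ z, |f z| ≤ B) (hΛ : 0 ≤ Λ)
    (hL : ∀ z w, |f z - f w| ≤ Λ * ‖z - w‖) :
    Tendsto (fun n => avgS (S n) f) atTop (nhds (∫ z, mV z * f z)) := by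
  have hf : Continuous f := by
    refine LipschitzWith.continuous (K := Λ.toNNReal) (LipschitzWith.of_dist_le_mul fun x y => ?_)
    rw [Real.coe_toNNReal _ hΛ, Real.dist_eq, dist_eq_norm]; exact hL x y
  have hfi : ∀ g : ℂ → ℝ, Integrable g → Integrable (fun z => f z * g z) := fun g hg =>
    hg.bdd_mul (c := B) hf.aestronglyMeasurable (Eventually.of_forall fun z => hB z)
  set M := ∫ w, mV w * ‖w‖ with hM
  have hM0 : 0 ≤ M := integral_nonneg fun w => mul_nonneg (mV_pos w).le (norm_nonneg w)
  rw [Metric.tendsto_atTop']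
  intro ε hε
  obtain ⟨s, hs, hsε⟩ : ∃ s : ℝ, 0 < s ∧ 8 * Λ * √s * M < ε / 2 := by
    refine ⟨(ε / (2 * (8 * Λ * M + 1)))^2 / 4, by positivity, ?_⟩
    have : √((ε / (2 * (8 * Λ * M + 1)))^2 / 4) = ε / (2 * (8 * Λ * M + 1)) / 2 := by
      rw [Real.sqrt_div (by positivity), Real.sqrt_sq (by positivity)]
      congr 1
      rw [show (4:ℝ) = 2^2 by norm_num, Real.sqrt_sq (by norm_num)]
    rw [this]
    have h1 : 0 < 8 * Λ * M + 1 := by positivity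
    have h2 : 8 * Λ * (ε / (2 * (8 * Λ * M + 1)) / 2) * M = (ε/2) * ((8*Λ*M) / (2*(8 * Λ * M + 1))) := by
      field_simp
    rw [h2]
    have h3 : (8*Λ*M) / (2*(8 * Λ * M + 1)) < 1 := by
      rw [div_lt_one (by positivity)]
      have : 0 ≤ 8*Λ*M := by positivity
      linarith
    nlinarith
  set c := ∫ w, Ks s w with hc
  have hcge : s/4 ≤ c := Ks_integral_ge hs
  have hc0 : 0 < c := by linarith
  -- product integrability
  have hprod : Integrable (fun p : ℂ × ℂ => mV p.2 * Ks s (p.1 - p.2))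
      ((volume : Measure ℂ).prod volume) :=
    mV_int.convolution_integrand (ContinuousLinearMap.mul ℝ ℝ) (Ks_int hs)
  have hKtr : ∀ a, Integrable (fun b => Ks s (b - a)) := fun a => (Ks_int hs).comp_sub_right a
  have hKtr' : ∀ a, ∫ b, Ks s (b - a) = c := fun a => integral_sub_right_eq_self (Ks s) a
  set F : ℂ → ℝ := fun a => ∫ b, f b * Ks s (b - a) with hF
  set q : ℂ → ℝ := fun b => ∫ a, mV a * Ks s (b - a) with hq
  have hqi : Integrable q := hprod.integral_prod_left
  have hfprod : Integrable (fun p : ℂ × ℂ => f p.1 * (mV p.2 * Ks s (p.1 - p.2)))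
      ((volume : Measure ℂ).prod volume) :=
    hprod.bdd_mul (c := B) (hf.comp continuous_fst).aestronglyMeasurable
      (Eventually.of_forall fun z => hB z.1)
  have hFq : ∫ b, f b * q b = ∫ a, mV a * F a := by
    have h1 := integral_integral_swap (f := fun b a => f b * (mV a * Ks s (b - a))) hfprod
    simp only [hq, hF]
    simp_rw [integral_const_mul] at h1
    rw [h1]
    refine integral_congr_ae (Eventually.of_forall fun a => ?_)
    simp only
    rw [← integral_const_mul]
    refine integral_congr_ae (Eventually.of_forall fun b => ?_)
    simp only; ring
  have hq1 : ∫ b, q b = c := by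
    have h1 := integral_integral_swap (f := fun b a => mV a * Ks s (b - a)) hprod
    simp only [hq]
    rw [h1]
    simp_rw [integral_const_mul, hKtr']
    rw [integral_mul_const, mV_integral, one_mul]
  have hsch := scheffe (fun n b => avgS (S n) (fun a => Ks s (b - a))) q
    (fun n => avgS_integrable (S n) (fun a b => Ks s (b - a)) hKtr) hqi
    (fun n z => div_nonneg (Finset.sum_nonneg fun a _ => Ks_nonneg hs _) (Nat.cast_nonneg _))
    (fun z => integral_nonneg fun a => mul_nonneg (mV_pos a).le (Ks_nonneg hs _))
    (fun z => step3 S κ hT hs z)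
    (fun n => by
      rw [avgS_integral (S n) (fun a b => Ks s (b - a)) hKtr, hq1]
      simp_rw [hKtr']
      exact avgS_const (hS n) c) f hf B hB
  have hav : ∀ n, ∫ b, f b * avgS (S n) (fun a => Ks s (b - a)) = avgS (S n) F := by
    intro n
    simp_rw [← avgS_mul]
    rw [avgS_integral (S n) (fun a b => f b * Ks s (b - a)) (fun a => hfi _ (hKtr a))]
  simp_rw [hav] at hsch
  rw [hFq] at hsch
  have hFc : ∀ a, |F a - c * f a| ≤ Λ * (s * (√s * M)) := by
    intro a
    have e1 : F a = ∫ w, f (w + a) * Ks s w := by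
      rw [← integral_sub_right_eq_self (fun w => f (w + a) * Ks s w) a]
      simp [hF]
    have i1 : Integrable (fun w => f (w + a) * Ks s w) :=
      (Ks_int hs).bdd_mul (c := B) (by fun_prop) (Eventually.of_forall fun z => hB _)
    have e2 : F a - c * f a = ∫ w, (f (w + a) - f a) * Ks s w := by
      simp_rw [sub_mul]
      rw [integral_sub i1 ((Ks_int hs).const_mul _), integral_const_mul, e1]; ring
    rw [e2, ← Real.norm_eq_abs]
    refine (norm_integral_le_integral_norm _).trans ?_
    refine le_trans ?_ (mul_le_mul_of_nonneg_left (norm_Ks_le hs) hΛ)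
    rw [← integral_const_mul]
    have i2 : Integrable (fun w => (f (w + a) - f a) * Ks s w) := by
      simp_rw [sub_mul]; exact i1.sub ((Ks_int hs).const_mul _)
    refine integral_mono i2.norm ((norm_Ks_int hs).const_mul Λ) fun w => ?_
    simp only
    rw [norm_mul, Real.norm_of_nonneg (Ks_nonneg hs w), Real.norm_eq_abs]
    have := hL (w + a) a
    rw [add_sub_cancel_right] at this
    calc |f (w+a) - f a| * Ks s w ≤ (Λ * ‖w‖) * Ks s w :=
          mul_le_mul_of_nonneg_right this (Ks_nonneg hs w)
      _ = _ := by ring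
  have hFint : Integrable (fun a => mV a * F a) := by
    have := hfprod.integral_prod_right
    refine this.congr (Eventually.of_forall fun a => ?_)
    simp only [hF]
    rw [← integral_const_mul]
    refine integral_congr_ae (Eventually.of_forall fun b => ?_)
    simp only; ring
  have hfint : Integrable (fun a => mV a * f a) :=
    (hfi _ mV_int).congr (Eventually.of_forall fun a => by simp only; ring)
  have hd2 : |(∫ a, mV a * F a) - c * ∫ a, mV a * f a| ≤ Λ * (s * (√s * M)) := by
    rw [← integral_const_mul, ← integral_sub hFint (hfint.const_mul c), ← Real.norm_eq_abs]
    refine (norm_integral_le_integral_norm _).trans ?_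
    have e : ∫ a, mV a * (Λ * (s * (√s * M))) = Λ * (s * (√s * M)) := by
      rw [integral_mul_const, mV_integral, one_mul]
    refine le_trans ?_ e.le
    refine integral_mono (hFint.sub (hfint.const_mul c)).norm (mV_int.mul_const _) fun a => ?_
    simp only
    have e3 : mV a * F a - c * (mV a * f a) = mV a * (F a - c * f a) := by ring
    rw [e3, norm_mul, Real.norm_of_nonneg (mV_pos a).le]
    exact mul_le_mul_of_nonneg_left (hFc a) (mV_pos a).le
  obtain ⟨N, hN⟩ := (Metric.tendsto_atTop'.1 hsch) (c * (ε/2)) (by positivity)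
  refine ⟨N, fun n hn => ?_⟩
  have h1 := hN n hn
  rw [Real.dist_eq] at h1 ⊢
  have h2 : |avgS (S n) F - c * avgS (S n) f| ≤ Λ * (s * (√s * M)) := by
    rw [← avgS_mul, ← avgS_sub]
    exact avgS_abs_le (hS n) _ _ hFc
  have h3 : c * |avgS (S n) f - ∫ z, mV z * f z| < c * ε := by
    rw [← abs_of_pos hc0, ← abs_mul, abs_of_pos hc0]
    have e : c * (avgS (S n) f - ∫ z, mV z * f z) = -(avgS (S n) F - c * avgS (S n) f)
      + (avgS (S n) F - ∫ a, mV a * F a) + ((∫ a, mV a * F a) - c * ∫ a, mV a * f a) := by ring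
    have hb : 2 * (Λ * (s * (√s * M))) ≤ c * (8 * Λ * √s * M) := by
      have : 0 ≤ 8 * Λ * √s * M := by positivity
      nlinarith
    have hb2 : c * (8 * Λ * √s * M) < c * (ε/2) := by gcongr
    rw [e]
    rw [abs_lt]
    rw [abs_le] at h2 hd2
    rw [abs_lt] at h1
    constructor <;> linarith
  exact lt_of_mul_lt_mul_left h3 hc0.le



/-- real-valued Hamiltonian on the complex plane -/
noncomputable def HC (n : ℕ) (β : ℝ) (x : Fin n → ℂ) : ℝ :=
  -∑ i : Fin n, ∑ j : Fin n, (if i ≠ j then Real.log ‖x i - x j‖ else 0)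
    + β * ∑ i : Fin n, LV (x i)

lemma dsum_split {n : ℕ} (g : Fin n → Fin n → ℝ) (hsym : ∀ i j, g i j = g j i)
    (h0 : ∀ i, g i i = 0) (i : Fin n) :
    ∑ k, ∑ j, g k j = 2 * ∑ j ∈ Finset.univ.erase i, g i j +
      ∑ k ∈ Finset.univ.erase i, ∑ j ∈ Finset.univ.erase i, g k j := by
  have h1 : ∀ φ : Fin n → ℝ, ∑ k, φ k = φ i + ∑ k ∈ Finset.univ.erase i, φ k := fun φ =>
    (Finset.add_sum_erase _ φ (Finset.mem_univ i)).symm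
  rw [h1 (fun k => ∑ j, g k j)]
  simp_rw [fun k => h1 (g k)]
  rw [Finset.sum_add_distrib, h0, Finset.sum_congr rfl (fun k _ => hsym k i)]
  ring

lemma HC_split {n : ℕ} (β : ℝ) (x : Fin n → ℂ) (i : Fin n) :
    HC n β x = -(2 * ∑ j ∈ Finset.univ.erase i, Real.log ‖x i - x j‖) + β * LV (x i) +
      (-(∑ k ∈ Finset.univ.erase i, ∑ j ∈ Finset.univ.erase i,
        (if k ≠ j then Real.log ‖x k - x j‖ else 0)) + β * ∑ k ∈ Finset.univ.erase i, LV (x k)) := by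
  unfold HC
  rw [dsum_split (fun i j => if i ≠ j then Real.log ‖x i - x j‖ else 0) _ (by simp) i,
    ← Finset.add_sum_erase _ _ (Finset.mem_univ i)]
  · have : ∑ j ∈ Finset.univ.erase i, (if i ≠ j then Real.log ‖x i - x j‖ else 0) =
        ∑ j ∈ Finset.univ.erase i, Real.log ‖x i - x j‖ := by
      refine Finset.sum_congr rfl fun j hj => ?_
      rw [if_pos (Finset.ne_of_mem_erase hj).symm]
    rw [this]; ring
  · intro i j
    by_cases h : i = j
    · simp [h]
    · rw [if_pos h, if_pos (Ne.symm h), norm_sub_rev]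

lemma min_ineq {n : ℕ} (β : ℝ) (x : Fin n → ℂ) (hx : Function.Injective x)
    (hmin : ∀ z : Fin n → ℂ, Function.Injective z → HC n β x ≤ HC n β z) (i : Fin n) (y : ℂ)
    (hy : ∀ j, j ≠ i → y ≠ x j) :
    2 * ∑ j ∈ Finset.univ.erase i, Real.log ‖y - x j‖ - β * LV y ≤
      2 * ∑ j ∈ Finset.univ.erase i, Real.log ‖x i - x j‖ - β * LV (x i) := by
  have hz : Function.Injective (Function.update x i y) := by
    intro a b hab
    by_cases ha : a = i <;> by_cases hb : b = i
    · rw [ha, hb]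
    · subst ha; rw [Function.update_self, Function.update_of_ne hb] at hab
      exact absurd hab (hy b hb)
    · subst hb; rw [Function.update_self, Function.update_of_ne ha] at hab
      exact absurd hab.symm (hy a ha)
    · rw [Function.update_of_ne ha, Function.update_of_ne hb] at hab; exact hx hab
  have h := hmin _ hz
  rw [HC_split β x i, HC_split β _ i] at h
  have u : ∀ k ∈ Finset.univ.erase i, Function.update x i y k = x k := fun k hk =>
    Function.update_of_ne (Finset.ne_of_mem_erase hk) _ _
  have e1 : ∑ j ∈ Finset.univ.erase i, Real.log ‖Function.update x i y i - Function.update x i y j‖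
      = ∑ j ∈ Finset.univ.erase i, Real.log ‖y - x j‖ :=
    Finset.sum_congr rfl fun j hj => by rw [u j hj, Function.update_self]
  have e2 : ∑ k ∈ Finset.univ.erase i, ∑ j ∈ Finset.univ.erase i,
        (if k ≠ j then Real.log ‖Function.update x i y k - Function.update x i y j‖ else 0) =
      ∑ k ∈ Finset.univ.erase i, ∑ j ∈ Finset.univ.erase i,
        (if k ≠ j then Real.log ‖x k - x j‖ else 0) :=
    Finset.sum_congr rfl fun k hk => Finset.sum_congr rfl fun j hj => by rw [u j hj, u k hk]
  have e3 : ∑ k ∈ Finset.univ.erase i, LV (Function.update x i y k) =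
      ∑ k ∈ Finset.univ.erase i, LV (x k) := Finset.sum_congr rfl fun k hk => by rw [u k hk]
  rw [e1, e2, e3, Function.update_self] at h
  linarith

lemma exists_good {m : ℕ} (c : ℝ) (hc0 : 0 ≤ c) (x : Fin (m+1) → ℂ)
    (hx : Function.Injective x) :
    ∃ i, 2 * ∑ j ∈ Finset.univ.erase i, Real.log ‖x i - x j‖ - (m + c) * LV (x i)
      - ∑ j ∈ Finset.univ.erase i, LV (x j) ≤
      -(2 * (∑ k ∈ Finset.range (m+1), Real.log (m.choose k)) / (m+1)) := by
  set Sm := ∑ k ∈ Finset.range (m+1), Real.log (m.choose k)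
  set T := ∑ i, LV (x i) with hT
  have hT0 : 0 ≤ T := Finset.sum_nonneg fun i _ => LV_nonneg _
  have hE := energy_upper x hx
  have e1 : ∀ i, ∑ j ∈ Finset.univ.erase i, LV (x j) = T - LV (x i) := fun i => by
    rw [hT, ← Finset.add_sum_erase _ _ (Finset.mem_univ i)]; ring
  have e2 : ∀ i, ∑ j ∈ Finset.univ.erase i, Real.log ‖x i - x j‖ =
      ∑ j, (if i ≠ j then Real.log ‖x i - x j‖ else 0) := fun i => by
    rw [← Finset.add_sum_erase _ _ (Finset.mem_univ i)]
    simp only [ne_eq, not_true_eq_false, if_false, zero_add]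
    refine Finset.sum_congr rfl fun j hj => ?_
    rw [if_pos (Finset.ne_of_mem_erase hj).symm]
  have hE' : ∑ i, ∑ j, (if i ≠ j then Real.log ‖x i - x j‖ else 0) - m * T ≤ -Sm := hE
  obtain ⟨i, -, hi⟩ := Finset.exists_le_of_sum_le (s := (Finset.univ : Finset (Fin (m+1))))
    (f := fun i => 2 * ∑ j ∈ Finset.univ.erase i, Real.log ‖x i - x j‖ - (m + c) * LV (x i)
      - ∑ j ∈ Finset.univ.erase i, LV (x j)) (g := fun _ => -(2 * Sm / (m+1)))
    Finset.univ_nonempty (by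
      simp_rw [e1, e2]
      rw [Finset.sum_sub_distrib, Finset.sum_sub_distrib, Finset.sum_sub_distrib,
        ← Finset.mul_sum, ← Finset.mul_sum, ← hT, Finset.sum_const, Finset.sum_const]
      simp only [Finset.card_univ, Fintype.card_fin, nsmul_eq_mul]
      push_cast
      have : ((m:ℝ)+1) * -(2 * Sm / (m+1)) = -(2*Sm) := by field_simp
      rw [this]
      nlinarith [mul_nonneg hc0 hT0])
  exact ⟨i, hi⟩

lemma l1_bound (S : Finset ℂ) (δ ε : ℝ) (hδ : 0 ≤ δ) (hε : 0 ≤ ε)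
    (h : ∀ z, z ∉ S → avgS S (fun a => Real.log ‖z - a‖) - (1/2 + δ) * LV z
      - avgS S (fun a => LV a / 2) + 1/2 ≤ ε) :
    ∫ z, mV z * |avgS S (fun a => Real.log ‖z - a‖) - LV z / 2 + (1/2 - avgS S (fun a => LV a / 2))|
      ≤ 2 * ε + 2 * δ := by
  set κ := avgS S (fun a => LV a / 2) with hκ
  have i1 := avgS_log_int S
  have e1 : ∫ z, mV z * avgS S (fun a => Real.log ‖z - a‖) = κ := by
    simp_rw [← avgS_mul]
    rw [avgS_integral S (fun a z => mV z * Real.log ‖z - a‖) mVlog_int]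
    simp_rw [mVlog_integral]
    rfl
  have i2 := mVL_int
  set G : ℂ → ℝ := fun z => (2 * ε + κ - 1/2) * mV z + (1/2 + 2 * δ) * (mV z * LV z)
    - mV z * avgS S (fun a => Real.log ‖z - a‖) with hG
  have iG : Integrable G := ((mV_int.const_mul _).add (i2.const_mul _)).sub i1
  have eG : ∫ z, G z = 2 * ε + 2 * δ := by
    have s1 := integral_sub ((mV_int.const_mul (2 * ε + κ - 1/2)).add (i2.const_mul (1/2 + 2 * δ))) i1
    have s2 := integral_add (mV_int.const_mul (2 * ε + κ - 1/2)) (i2.const_mul (1/2 + 2 * δ))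
    refine s1.trans ?_
    simp only [Pi.add_apply]
    rw [s2, e1, integral_const_mul, integral_const_mul, mV_integral, mVL_integral]
    ring
  rw [← eG]
  have hmeas : Measurable (fun z => mV z * |avgS S (fun a => Real.log ‖z - a‖) - LV z / 2 + (1/2 - κ)|) :=
    mV_cont.measurable.mul (((avgS_log_meas S).sub (LV_cont.measurable.div_const 2)).add
      measurable_const).abs
  have hae : ∀ᵐ z : ℂ, mV z * |avgS S (fun a => Real.log ‖z - a‖) - LV z / 2 + (1/2 - κ)| ≤ G z := by
    have hnull : ∀ᵐ z : ℂ, z ∉ (S : Set ℂ) := by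
      rw [ae_iff]; simpa using (S.finite_toSet).measure_zero volume
    filter_upwards [hnull] with z hz
    have h1 := h z hz
    have h2 := LV_nonneg z
    have : G z = mV z * (2 * ε + κ - 1/2 + (1/2 + 2*δ) * LV z - avgS S (fun a => Real.log ‖z - a‖)) := by
      simp only [hG]; ring
    rw [this]
    refine mul_le_mul_of_nonneg_left ?_ (mV_pos z).le
    rw [abs_le]
    have h3 := mul_nonneg hδ h2
    constructor <;> nlinarith
  exact integral_mono_ae (iG.mono' hmeas.aestronglyMeasurable (hae.mono fun z hz => by
    rwa [Real.norm_of_nonneg (mul_nonneg (mV_pos z).le (abs_nonneg _))])) iG hae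

lemma key {m : ℕ} (hm : 1 ≤ m) (c : ℝ) (hc0 : 0 ≤ c) (hc1 : c ≤ 1) (x : Fin (m+1) → ℂ)
    (hx : Function.Injective x)
    (hmin : ∀ z : Fin (m+1) → ℂ, Function.Injective z → HC (m+1) (m+c) x ≤ HC (m+1) (m+c) z) :
    ∃ (i : Fin (m+1)) (κ : ℝ),
      ∫ z, mV z * |avgS ((Finset.univ.erase i).image x) (fun a => Real.log ‖z - a‖) - LV z / 2 + κ|
        ≤ 2 * ((1 + Real.log m) / (m+1)) + 1 / m := by
  obtain ⟨i, hi⟩ := exists_good c hc0 x hx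
  set S := (Finset.univ.erase i).image x with hS
  have hm0 : (0:ℝ) < m := by exact_mod_cast hm
  have hcard : S.card = m := by
    rw [hS, Finset.card_image_of_injective _ hx, Finset.card_erase_of_mem (Finset.mem_univ i)]
    simp
  have hsum : ∀ φ : ℂ → ℝ, ∑ j ∈ Finset.univ.erase i, φ (x j) = m * avgS S φ := by
    intro φ
    unfold avgS
    rw [hcard, hS, Finset.sum_image (fun a _ b _ h => hx h)]
    field_simp
  have hne : S.Nonempty := by rw [← Finset.card_pos, hcard]; exact hm
  have hlog : 0 ≤ Real.log m := Real.log_natCast_nonneg m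
  refine ⟨i, 1/2 - avgS S (fun a => LV a / 2), ?_⟩
  refine (l1_bound S (c / (2*m)) ((1 + Real.log m) / (m+1)) (by positivity) (by positivity) ?_).trans ?_
  · intro z hz
    have h1 := min_ineq (m+c) x hx hmin i z (fun j hj h => hz (by
      rw [hS, Finset.mem_image]; exact ⟨j, by simp [hj], h.symm⟩))
    have h2 := sum_log_choose_ge m
    set Sm := ∑ k ∈ Finset.range (m+1), Real.log (m.choose k)
    rw [hsum (fun a => Real.log ‖z - a‖)] at h1
    rw [hsum LV] at hi
    have e : avgS S LV = 2 * avgS S (fun a => LV a / 2) := by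
      rw [← avgS_mul]; congr 1; ext a; ring
    rw [e] at hi
    set U := avgS S (fun a => Real.log ‖z - a‖)
    set K := avgS S (fun a => LV a / 2)
    have h3 : 2 * (m * U) - (m + c) * LV z - m * (2 * K) ≤ -(2 * Sm / (m+1)) := by linarith
    have h4 : 2 * m * (U - (1/2 + c/(2*m)) * LV z - K + 1/2) =
        (2 * (m * U) - (m + c) * LV z - m * (2 * K)) + m := by field_simp
    have h5 : -(2 * Sm / (m+1)) + m ≤ 2 * m * ((1 + Real.log m) / (m+1)) := by
      have : -(2 * Sm / ((m:ℝ)+1)) + m = (m * (m+1) - 2 * Sm) / (m+1) := by field_simp; ring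
      rw [this, ← mul_div_assoc]
      gcongr
      linarith
    refine le_of_mul_le_mul_left (a := 2 * (m:ℝ)) ?_ (by positivity)
    linarith
  · have : 2 * (c / (2 * (m:ℝ))) = c / m := by field_simp
    rw [this]
    gcongr


lemma err_tendsto : Tendsto (fun n : ℕ => 2 * ((1 + Real.log ((n+1:ℕ):ℝ)) / (((n+1:ℕ):ℝ)+1)) + 1 / ((n+1:ℕ):ℝ))
    atTop (nhds 0) := by
  have h1 : Tendsto (fun n : ℕ => (n : ℝ)) atTop atTop := tendsto_natCast_atTop_atTop
  have h2 : Tendsto (fun y : ℝ => 2 * ((1 + Real.log y) / (y + 1)) + 1 / y) atTop (nhds 0) := by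
    have a1 : Tendsto (fun y : ℝ => 1 / y) atTop (nhds 0) := by
      simpa using tendsto_inv_atTop_zero (𝕜 := ℝ)
    have a2 : Tendsto (fun y : ℝ => Real.log y / y) atTop (nhds 0) := by
      exact Real.isLittleO_log_id_atTop.tendsto_div_nhds_zero
    have a3 : Tendsto (fun y : ℝ => 2 * (1 / y + Real.log y / y) + 1 / y) atTop (nhds 0) := by
      simpa using ((a1.add a2).const_mul 2).add a1
    refine squeeze_zero' ?_ ?_ a3
    · filter_upwards [eventually_ge_atTop 1] with y hy
      have := Real.log_nonneg hy
      positivity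
    · filter_upwards [eventually_ge_atTop 1] with y hy
      have := Real.log_nonneg hy
      rw [← add_div]
      gcongr
      linarith
  exact (h2.comp h1).comp (tendsto_add_atTop_nat 1)

lemma lip_conv (c : ℝ) (hc0 : 0 ≤ c) (hc1 : c ≤ 1) (X : (n : ℕ) → Fin n → ℂ)
    (hX : ∀ n, 2 ≤ n → Function.Injective (X n))
    (hmin : ∀ n, 2 ≤ n → ∀ z : Fin n → ℂ, Function.Injective z →
      HC n ((n:ℝ) - 1 + c) (X n) ≤ HC n ((n:ℝ) - 1 + c) z)
    (f : ℂ → ℝ) (B Λ : ℝ) (hB : ∀ z, |f z| ≤ B) (hΛ : 0 ≤ Λ)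
    (hL : ∀ z w, |f z - f w| ≤ Λ * ‖z - w‖) :
    Tendsto (fun n : ℕ => (1 / (n:ℝ)) * ∑ i, f (X n i)) atTop (nhds (∫ z, mV z * f z)) := by
  have hk : ∀ n : ℕ, ∃ (i : Fin (n+2)) (κ : ℝ),
      ∫ z, mV z * |avgS ((Finset.univ.erase i).image (X (n+2))) (fun a => Real.log ‖z - a‖)
        - LV z / 2 + κ| ≤ 2 * ((1 + Real.log ((n+1:ℕ):ℝ)) / (((n+1:ℕ):ℝ)+1)) + 1 / ((n+1:ℕ):ℝ) := by
    intro n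
    refine key (m := n+1) (by omega) c hc0 hc1 (X (n+2)) (hX _ (by omega)) fun z hz => ?_
    have := hmin (n+2) (by omega) z hz
    have e : ((n+2:ℕ):ℝ) - 1 + c = ((n+1:ℕ):ℝ) + c := by push_cast; ring
    rw [e] at this
    exact this
  choose i κ hiκ using hk
  set S : ℕ → Finset ℂ := fun n => (Finset.univ.erase (i n)).image (X (n+2)) with hS
  have hcard : ∀ n, (S n).card = n + 1 := fun n => by
    simp only [hS]
    rw [Finset.card_image_of_injective _ (hX _ (by omega)), Finset.card_erase_of_mem (Finset.mem_univ _)]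
    simp
  have hne : ∀ n, (S n).Nonempty := fun n => by rw [← Finset.card_pos, hcard]; omega
  have hw := weak_lip S κ hne (squeeze_zero (fun n => integral_nonneg fun z =>
    mul_nonneg (mV_pos z).le (abs_nonneg _)) hiκ err_tendsto) f B Λ hB hΛ hL
  rw [← tendsto_add_atTop_iff_nat 2]
  have hd : Tendsto (fun n : ℕ => (1 / ((n+2:ℕ):ℝ)) * ∑ j, f (X (n+2) j) - avgS (S n) f) atTop (nhds 0) := by
    have hz : Tendsto (fun n : ℕ => 2 * B * (1 / ((n:ℝ)+1))) atTop (nhds 0) := by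
      simpa using (tendsto_one_div_add_atTop_nhds_zero_nat (𝕜 := ℝ)).const_mul (2*B)
    refine squeeze_zero_norm (fun n => ?_) hz
    have hs : ∑ j, f (X (n+2) j) = f (X (n+2) (i n)) + (n+1) * avgS (S n) f := by
      rw [← Finset.add_sum_erase _ _ (Finset.mem_univ (i n))]
      unfold avgS
      rw [hcard]
      simp only [hS]
      rw [Finset.sum_image (fun a _ b _ h => hX _ (by omega) h)]
      push_cast
      field_simp
    rw [hs]
    have e : (1 / ((n+2:ℕ):ℝ)) * (f (X (n+2) (i n)) + (n+1) * avgS (S n) f) - avgS (S n) f =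
        (f (X (n+2) (i n)) - avgS (S n) f) * (1 / ((n:ℝ)+2)) := by
      push_cast; field_simp; ring
    rw [e, norm_mul, Real.norm_of_nonneg (by positivity : 0 ≤ 1 / ((n:ℝ)+2)), Real.norm_eq_abs]
    have h1 := hB (X (n+2) (i n))
    have h2 := avgS_abs_le (hne n) f B hB
    have h3 : |f (X (n+2) (i n)) - avgS (S n) f| ≤ 2 * B := by
      rw [abs_le] at *; constructor <;> linarith
    have hB0 : 0 ≤ 2 * B := (abs_nonneg _).trans h3
    gcongr
    norm_num
  have := hd.add hw
  simpa using this

/-- identification of the complex plane with the Euclidean plane -/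
noncomputable def eC : ℂ ≃ₗᵢ[ℝ] EuclideanSpace ℝ (Fin 2) := Complex.orthonormalBasisOneI.repr

lemma muV_integral (f : EuclideanSpace ℝ (Fin 2) → ℝ) :
    ∫ a, f a ∂muV = ∫ z : ℂ, mV z * f (eC z) := by
  have hc : Continuous (fun x : EuclideanSpace ℝ (Fin 2) => 1 / (π * (1 + ‖x‖^2)^2)) :=
    continuous_const.div (by fun_prop) fun x => by positivity
  unfold muV
  rw [integral_withDensity_eq_integral_toReal_smul hc.measurable.ennreal_ofReal
    (Eventually.of_forall fun x => ENNReal.ofReal_lt_top)]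
  have hmp := (LinearIsometryEquiv.measurePreserving eC)
  rw [← hmp.integral_comp eC.toHomeomorph.measurableEmbedding]
  refine integral_congr_ae (Eventually.of_forall fun z => ?_)
  simp only [smul_eq_mul, LinearIsometryEquiv.norm_map]
  rw [ENNReal.toReal_ofReal (by positivity)]
  rfl

lemma muV_prob : IsProbabilityMeasure muV := by
  have hc : Continuous (fun x : EuclideanSpace ℝ (Fin 2) => 1 / (π * (1 + ‖x‖^2)^2)) :=
    continuous_const.div (by fun_prop) fun x => by positivity
  have h := muV_integral (fun _ => 1)
  simp only [mul_one, mV_integral, integral_const, smul_eq_mul] at h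
  constructor
  have := congrArg ENNReal.ofReal h
  rw [Measure.real, ENNReal.ofReal_toReal_eq_iff.2] at this
  · simpa using this
  · intro htop
    rw [Measure.real, htop] at h
    simp at h

lemma wlim (x : (n : ℕ) → Fin n → EuclideanSpace ℝ (Fin 2)) (c : ℝ) (hc0 : 0 ≤ c) (hc1 : c ≤ 1)
    (hX : ∀ n, 2 ≤ n → Function.Injective (x n))
    (hmin : ∀ n, 2 ≤ n → ∀ z : Fin n → EuclideanSpace ℝ (Fin 2), Function.Injective z →
      HC n ((n:ℝ) - 1 + c) (fun i => eC.symm (x n i)) ≤ HC n ((n:ℝ) - 1 + c) (fun i => eC.symm (z i)))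
    (f : BoundedContinuousFunction (EuclideanSpace ℝ (Fin 2)) ℝ) :
    Tendsto (fun n : ℕ => (1 / (n : ℝ)) * ∑ i : Fin n, f (x n i)) atTop
        (nhds (∫ a, f a ∂muV)) := by
  have hprob := muV_prob
  set μs : ℕ → Measure (EuclideanSpace ℝ (Fin 2)) := fun n =>
    ((n+1:ℕ):ENNReal)⁻¹ • ∑ i : Fin (n+1), Measure.dirac (x (n+1) i) with hμs
  have hp : ∀ n, IsProbabilityMeasure (μs n) := by
    intro n
    constructor
    simp only [hμs, Measure.smul_apply, Measure.finsetSum_apply, measure_univ, smul_eq_mul,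
      Finset.sum_const, Finset.card_univ, Fintype.card_fin, nsmul_eq_mul, mul_one]
    exact ENNReal.inv_mul_cancel (by simp) (by simp)
  have hIntegr : ∀ (g : EuclideanSpace ℝ (Fin 2) → ℝ), ∀ n, ∫ a, g a ∂(μs n) =
      (1 / ((n+1:ℕ):ℝ)) * ∑ i, g (x (n+1) i) := by
    intro g n
    simp only [hμs]
    rw [integral_smul_measure, integral_finsetSum_measure]
    · simp only [integral_dirac, ENNReal.toReal_inv, ENNReal.toReal_natCast, smul_eq_mul, one_div]
    · intro i _
      exact integrable_dirac (by simp)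
  set P : ℕ → ProbabilityMeasure (EuclideanSpace ℝ (Fin 2)) := fun n => ⟨μs n, hp n⟩ with hP
  set Q : ProbabilityMeasure (EuclideanSpace ℝ (Fin 2)) := ⟨muV, hprob⟩ with hQ
  have key : Tendsto P atTop (nhds Q) := by
    refine tendsto_iff_forall_lipschitz_integral_tendsto.2 ?_
    rintro g ⟨C, hC⟩ ⟨L, hL⟩
    have h1 := lip_conv c hc0 hc1 (fun n i => eC.symm (x n i))
      (fun n hn => eC.symm.injective.comp (hX n hn))
      (fun n hn z hz => by
        have := hmin n hn (fun i => eC (z i)) (eC.injective.comp hz)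
        simpa using this)
      (fun z => g (eC z)) (|g 0| + C) L
      (fun z => by
        have := hC (eC z) 0
        rw [Real.dist_eq] at this
        have h2 := abs_sub_abs_le_abs_sub (g (eC z)) (g 0)
        linarith) L.2
      (fun z w => by
        have := hL.dist_le_mul (eC z) (eC w)
        rwa [Real.dist_eq, eC.dist_map, dist_eq_norm] at this)
    rw [← muV_integral] at h1
    simp only [LinearIsometryEquiv.apply_symm_apply] at h1
    have h2 := (tendsto_add_atTop_iff_nat 1).2 h1
    refine h2.congr fun n => ?_
    exact (hIntegr g n).symm
  have h := (ProbabilityMeasure.tendsto_iff_forall_integral_tendsto.1 key) f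
  rw [← tendsto_add_atTop_iff_nat 1]
  exact h.congr fun n => hIntegr f n

lemma HC_euc (n : ℕ) (β : ℝ) (z : Fin n → EuclideanSpace ℝ (Fin 2)) :
    HC n β (fun i => eC.symm (z i)) =
      -∑ i : Fin n, ∑ j : Fin n, (if i ≠ j then Real.log (dist (z i) (z j)) else 0)
      + β * ∑ i : Fin n, Real.log (1 + ‖z i‖^2) := by
  unfold HC LV
  simp only [← map_sub, LinearIsometryEquiv.norm_map, dist_eq_norm]

lemma exists_inj (n : ℕ) : ∃ z : Fin n → EuclideanSpace ℝ (Fin 2), Function.Injective z := by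
  refine ⟨fun i => eC ((i : ℕ) : ℂ), fun a b h => ?_⟩
  have := eC.injective h
  exact Fin.ext (by exact_mod_cast this)

/-- If for every `n ≥ 2` the tuple `(x₁ⁿ,…,xₙⁿ)` minimizes `w̄_n` (or, alternatively, `w_n`),
then the empirical measures `(1/n) ∑ δ_{xᵢⁿ}` converge weakly to `μ_V`. -/
theorem empirical_measures_converge
    (x : (n : ℕ) → Fin n → EuclideanSpace ℝ (Fin 2))
    (hmin : (∀ n, 2 ≤ n → ∀ z : Fin n → EuclideanSpace ℝ (Fin 2),
              wbarHamE n (x n) ≤ wbarHamE n z) ∨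
            (∀ n, 2 ≤ n → ∀ z : Fin n → EuclideanSpace ℝ (Fin 2),
              wHamE n (x n) ≤ wHamE n z)) :
    ∀ f : BoundedContinuousFunction (EuclideanSpace ℝ (Fin 2)) ℝ,
      Tendsto (fun n : ℕ => (1 / (n : ℝ)) * ∑ i : Fin n, f (x n i)) atTop
        (nhds (∫ a, f a ∂muV)) := by
  intro f
  rcases hmin with h | h
  · have hX : ∀ n, 2 ≤ n → Function.Injective (x n) := by
      intro n hn
      by_contra hni
      obtain ⟨z, hz⟩ := exists_inj n
      have := h n hn z
      unfold wbarHamE at this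
      rw [if_neg hni, if_pos hz] at this
      exact EReal.coe_ne_top _ (top_le_iff.1 this)
    refine wlim x 0 le_rfl zero_le_one hX (fun n hn z hz => ?_) f
    have := h n hn z
    unfold wbarHamE at this
    rw [if_pos (hX n hn), if_pos hz, EReal.coe_le_coe_iff] at this
    rw [HC_euc, HC_euc, add_zero]
    exact this
  · have hX : ∀ n, 2 ≤ n → Function.Injective (x n) := by
      intro n hn
      by_contra hni
      obtain ⟨z, hz⟩ := exists_inj n
      have := h n hn z
      unfold wHamE at this
      rw [if_neg hni, if_pos hz] at this
      exact EReal.coe_ne_top _ (top_le_iff.1 this)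
    refine wlim x 1 zero_le_one le_rfl hX (fun n hn z hz => ?_) f
    have := h n hn z
    unfold wHamE at this
    rw [if_pos (hX n hn), if_pos hz, EReal.coe_le_coe_iff] at this
    rw [HC_euc, HC_euc, sub_add_cancel]
    exact this
end

section
/- For every n ≥ 2 there exists an n-tuple (x̄₁,…,x̄ₙ) ∈ (ℝ²)ⁿ which minimizes w̄_n over (ℝ²)ⁿ and which satisfies (1/n)∑_{i=1}^n log(1+|x̄ᵢ|²) = ∫_{ℝ²} log(1+|x|²) dμ_V(x) = 1. -/
open Real Classical Filter MeasureTheory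

lemma aux_max {n : ℕ} (a b : Fin n → ℂ) (r : ℝ) (hr : 0 < r) :
    ∃ z : ℂ, ‖z‖ = r ∧ ∏ i, max (r * ‖b i‖) (‖a i‖) ≤ ∏ i, ‖z * b i - a i‖ := by
  set Q : ℂ → ℂ := fun z => ∏ i, (if r * ‖b i‖ ≤ ‖a i‖ then z * b i - a i
    else r * (starRingEnd ℂ (b i)) - (starRingEnd ℂ (a i)) * z / r) with hQ
  have hd : Differentiable ℂ Q := by
    apply Differentiable.fun_finsetProd
    intro i _
    split_ifs <;> fun_prop
  obtain ⟨z, hz, hmax⟩ := Complex.exists_mem_frontier_isMaxOn_norm (f := Q)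
    (U := Metric.ball (0:ℂ) r) Metric.isBounded_ball ⟨0, by simpa using hr⟩ hd.diffContOnCl
  rw [frontier_ball _ hr.ne'] at hz
  have hzr : ‖z‖ = r := by simpa using hz
  refine ⟨z, hzr, ?_⟩
  have h0 := hmax (subset_closure (by simpa using hr : (0:ℂ) ∈ Metric.ball (0:ℂ) r))
  have h1 : ‖Q 0‖ = ∏ i, max (r * ‖b i‖) (‖a i‖) := by
    simp only [hQ, norm_prod]
    refine Finset.prod_congr rfl fun i _ => ?_
    split_ifs with h
    · simp [h]
    · rw [max_eq_left (not_le.mp h).le]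
      simp [abs_of_pos hr]
  have h2 : ‖Q z‖ = ∏ i, ‖z * b i - a i‖ := by
    simp only [hQ, norm_prod]
    refine Finset.prod_congr rfl fun i _ => ?_
    split_ifs with h
    · rfl
    · have hrc : (r:ℂ) ≠ 0 := by exact_mod_cast hr.ne'
      have hzz : z * starRingEnd ℂ z = (r:ℂ)^2 := by
        rw [Complex.mul_conj, Complex.normSq_eq_norm_sq, hzr]; push_cast; rfl
      have h3 : z * b i - a i = (z / r) * starRingEnd ℂ (r * (starRingEnd ℂ (b i)) - (starRingEnd ℂ (a i)) * z / r) := by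
        simp only [map_sub, map_mul, map_div₀, Complex.conj_conj, Complex.conj_ofReal]
        field_simp
        linear_combination (a i) * hzz
      rw [h3, norm_mul, RCLike.norm_conj, norm_div, hzr]
      simp [abs_of_pos hr, hr.ne']
  rw [← h1, ← h2]; exact h0

lemma aux_int (s : ℝ) (h0 : 0 ≤ s) (h1 : s ≤ 1) :
    IntervalIntegrable (fun u => Real.log (max (u * s) ((1-u)*(1-s)))) volume 0 1 ∧
    ∫ u in (0:ℝ)..1, Real.log (max (u * s) ((1-u)*(1-s))) = -1 := by
  have hl : ∀ c d : ℝ, IntervalIntegrable (fun u => Real.log (1-u)) volume c d := by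
    intro c d
    have := (intervalIntegral.intervalIntegrable_log' (a := 1 - c) (b := 1 - d)).comp_sub_left 1
    simpa using this
  have e1 : Set.EqOn (fun u => Real.log (1-u) + Real.log (1-s)) (fun u => Real.log (max (u * s) ((1-u)*(1-s)))) (Set.uIoo 0 (1-s)) := by
    rw [Set.uIoo_of_le (by linarith)]
    intro u hu
    have := hu.1; have := hu.2
    simp only
    rw [max_eq_right (by nlinarith), Real.log_mul (by linarith) (by linarith)]
  have e2 : Set.EqOn (fun u => Real.log u + Real.log s) (fun u => Real.log (max (u * s) ((1-u)*(1-s)))) (Set.uIoo (1-s) 1) := by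
    rw [Set.uIoo_of_le (by linarith)]
    intro u hu
    have := hu.1; have := hu.2
    simp only
    rw [max_eq_left (by nlinarith), Real.log_mul (by linarith) (by linarith)]
  have i1 : IntervalIntegrable (fun u => Real.log (1-u) + Real.log (1-s)) volume 0 (1-s) :=
    (hl _ _).add (by simp)
  have i2 : IntervalIntegrable (fun u => Real.log u + Real.log s) volume (1-s) 1 :=
    intervalIntegral.intervalIntegrable_log'.add (by simp)
  have j1 := i1.congr_uIoo e1
  have j2 := i2.congr_uIoo e2
  refine ⟨j1.trans j2, ?_⟩
  rw [← intervalIntegral.integral_add_adjacent_intervals j1 j2,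
    ← intervalIntegral.integral_congr_uIoo e1, ← intervalIntegral.integral_congr_uIoo e2,
    intervalIntegral.integral_add (hl _ _) (by simp), intervalIntegral.integral_add intervalIntegral.intervalIntegrable_log' (by simp),
    intervalIntegral.integral_comp_sub_left (fun u => Real.log u) 1, integral_log, integral_log]
  simp
  ring

lemma aux_exists {n : ℕ} (a b : Fin n → ℂ) (hab : ∀ i, ‖a i‖^2 + ‖b i‖^2 = 1) :
    ∃ z : ℂ, Real.exp (-n) ≤ ∏ i, (‖z * b i - a i‖^2 / (1 + ‖z‖^2)) := by
  have hs : ∀ i, 0 ≤ ‖b i‖^2 ∧ ‖b i‖^2 ≤ 1 := fun i => ⟨by positivity, by nlinarith [hab i, sq_nonneg ‖a i‖]⟩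
  set F : ℝ → ℝ := fun u => ∑ i, Real.log (max (u * ‖b i‖^2) ((1-u)*(1-‖b i‖^2))) with hF
  have hint : IntervalIntegrable F volume 0 1 := by
    have := IntervalIntegrable.sum (μ := volume) (a := 0) (b := 1) Finset.univ
      (f := fun i (u : ℝ) => Real.log (max (u * ‖b i‖^2) ((1-u)*(1-‖b i‖^2))))
      (fun i _ => (aux_int _ (hs i).1 (hs i).2).1)
    have hFe : F = ∑ i, fun (u : ℝ) => Real.log (max (u * ‖b i‖^2) ((1-u)*(1-‖b i‖^2))) := by
      ext u
      simp [hF]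
    rw [hFe]
    exact this
  have hval : ∫ u in (0:ℝ)..1, F u = -n := by
    simp only [hF]
    rw [intervalIntegral.integral_finsetSum fun i _ => (aux_int _ (hs i).1 (hs i).2).1]
    rw [Finset.sum_congr rfl fun i _ => (aux_int _ (hs i).1 (hs i).2).2]
    simp
  rw [intervalIntegral.integral_of_le zero_le_one] at hval
  have : IsProbabilityMeasure (volume.restrict (Set.Ioc (0:ℝ) 1)) := ⟨by simp⟩
  have hnull : volume.restrict (Set.Ioc (0:ℝ) 1) ((Set.Ioo (0:ℝ) 1)ᶜ) = 0 := by
    rw [← restrict_Ioo_eq_restrict_Ioc, Measure.restrict_apply measurableSet_Ioo.compl]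
    simp
  obtain ⟨u, hu, hle⟩ := exists_notMem_null_integral_le
    ((intervalIntegrable_iff_integrableOn_Ioc_of_le zero_le_one).1 hint) hnull
  rw [hval] at hle
  simp only [Set.mem_compl_iff, not_not, Set.mem_Ioo] at hu
  obtain ⟨hu0, hu1⟩ := hu
  have hu1' : 0 < 1 - u := by linarith
  obtain ⟨z, hz, hzle⟩ := aux_max a b (Real.sqrt (u/(1-u))) (Real.sqrt_pos.2 (by positivity))
  have hz2 : ‖z‖^2 = u/(1-u) := by rw [hz, Real.sq_sqrt (by positivity)]
  have hz3 : 1 + ‖z‖^2 = 1/(1-u) := by rw [hz2]; field_simp; ring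
  refine ⟨z, ?_⟩
  have hpos : ∀ i, 0 < max (u * ‖b i‖^2) ((1-u)*(1-‖b i‖^2)) := by
    intro i
    rcases eq_or_lt_of_le (hs i).1 with h | h
    · rw [← h]; simp [hu1]
    · exact lt_max_of_lt_left (by positivity)
  calc Real.exp (-n) ≤ Real.exp (F u) := Real.exp_le_exp.2 hle
    _ = ∏ i, max (u * ‖b i‖^2) ((1-u)*(1-‖b i‖^2)) := by
      rw [hF, Real.exp_sum]
      exact Finset.prod_congr rfl fun i _ => Real.exp_log (hpos i)
    _ = (∏ i : Fin n, (1-u)) * (∏ i, max (‖z‖ * ‖b i‖) (‖a i‖))^2 := by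
      rw [← Finset.prod_pow, ← Finset.prod_mul_distrib]
      refine Finset.prod_congr rfl fun i _ => ?_
      have ha : 1 - ‖b i‖^2 = ‖a i‖^2 := by linarith [hab i]
      rw [ha]
      rcases le_total (‖z‖ * ‖b i‖) (‖a i‖) with h | h
      · rw [max_eq_right h, max_eq_right]
        have := pow_le_pow_left₀ (by positivity) h 2
        rw [mul_pow, hz2, div_mul_eq_mul_div, div_le_iff₀ hu1'] at this
        linarith
      · rw [max_eq_left h, max_eq_left]
        · rw [mul_pow, hz2]; field_simp
        have := pow_le_pow_left₀ (by positivity) h 2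
        rw [mul_pow, hz2, div_mul_eq_mul_div, le_div_iff₀ hu1'] at this
        linarith
    _ ≤ (∏ i : Fin n, (1-u)) * (∏ i, ‖z * b i - a i‖)^2 := by
      rw [hz]
      gcongr
    _ = _ := by
      rw [← Finset.prod_pow, ← Finset.prod_mul_distrib, hz3]
      refine Finset.prod_congr rfl fun i _ => ?_
      field_simp

lemma aux_balance {n : ℕ} (a b : Fin n → ℂ) (hab : ∀ i, ‖a i‖^2 + ‖b i‖^2 = 1)
    (hb : ∃ i, b i ≠ 0) :
    ∃ z : ℂ, ∏ i, (‖z * b i - a i‖^2 / (1 + ‖z‖^2)) = Real.exp (-n) := by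
  have hc : Continuous (fun z : ℂ => ∏ i, (‖z * b i - a i‖^2 / (1 + ‖z‖^2))) := by
    refine continuous_finsetProd _ fun i _ => ?_
    refine Continuous.div (by fun_prop) (by fun_prop) fun z => by positivity
  have := mem_range_of_exists_le_of_exists_ge (c := Real.exp (-n)) hc ?_ (aux_exists a b hab)
  · exact this
  obtain ⟨i, hi⟩ := hb
  refine ⟨a i / b i, ?_⟩
  rw [Finset.prod_eq_zero (Finset.mem_univ i)]
  · positivity
  · simp [hi]

noncomputable def Dprod {n : ℕ} (a b : Fin n → ℂ) : ℝ :=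
  ∏ i, ∏ j, if i ≠ j then ‖a i * b j - a j * b i‖^2 else 1

lemma aux_exists_max (n : ℕ) : ∃ p : Fin n → ℂ × ℂ, (∀ i, ‖(p i).1‖^2 + ‖(p i).2‖^2 = 1) ∧
    ∀ q : Fin n → ℂ × ℂ, (∀ i, ‖(q i).1‖^2 + ‖(q i).2‖^2 = 1) →
      Dprod (fun i => (q i).1) (fun i => (q i).2) ≤ Dprod (fun i => (p i).1) (fun i => (p i).2) := by
  set S : Set (ℂ × ℂ) := {p | ‖p.1‖^2 + ‖p.2‖^2 = 1} with hS
  have hSc : IsCompact S := by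
    refine Metric.isCompact_of_isClosed_isBounded (isClosed_eq (by fun_prop) (by fun_prop)) ?_
    refine (Metric.isBounded_closedBall (x := (0 : ℂ × ℂ)) (r := 1)).subset fun p hp => ?_
    have hp' : ‖p.1‖^2 + ‖p.2‖^2 = 1 := hp
    simp only [mem_closedBall_zero_iff, Prod.norm_def, sup_le_iff]
    constructor <;> nlinarith [sq_nonneg ‖p.1‖, sq_nonneg ‖p.2‖, norm_nonneg p.1, norm_nonneg p.2]
  have hK : IsCompact (Set.univ.pi fun _ : Fin n => S) := isCompact_univ_pi fun _ => hSc
  obtain ⟨p, hp, hmax⟩ := hK.exists_isMaxOn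
    (f := fun q : Fin n → ℂ × ℂ => Dprod (fun i => (q i).1) (fun i => (q i).2))
    ⟨fun _ => (1,0), by simp [hS]⟩ (by
      apply Continuous.continuousOn
      unfold Dprod
      refine continuous_finsetProd _ fun i _ => continuous_finsetProd _ fun j _ => ?_
      split_ifs <;> fun_prop)
  refine ⟨p, fun i => hp i (Set.mem_univ _), fun q hq => hmax fun i _ => hq i⟩

lemma aux_energy_s9 {n : ℕ} (x : Fin n → EuclideanSpace ℝ (Fin 2)) (hx : Function.Injective x) :
    -∑ i : Fin n, ∑ j : Fin n, (if i ≠ j then Real.log (dist (x i) (x j)) else 0)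
      + ((n : ℝ) - 1) * ∑ i : Fin n, Real.log (1 + ‖x i‖^2)
    = -(1/2) * Real.log (∏ i, ∏ j, if i ≠ j then
        dist (x i) (x j)^2 / ((1 + ‖x i‖^2) * (1 + ‖x j‖^2)) else 1) := by
  have hd : ∀ i j, i ≠ j → dist (x i) (x j) ≠ 0 := fun i j h => dist_ne_zero.2 (hx.ne h)
  have hL : ∀ i, 1 + ‖x i‖^2 ≠ 0 := fun i => by positivity
  have hne : ∀ i j, (if i ≠ j then
        dist (x i) (x j)^2 / ((1 + ‖x i‖^2) * (1 + ‖x j‖^2)) else 1) ≠ 0 := by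
    intro i j
    split_ifs with h
    · exact div_ne_zero (pow_ne_zero _ (hd i j h)) (mul_ne_zero (hL i) (hL j))
    · exact one_ne_zero
  have hlog : ∀ i j, Real.log (if i ≠ j then
        dist (x i) (x j)^2 / ((1 + ‖x i‖^2) * (1 + ‖x j‖^2)) else 1)
      = 2 * (if i ≠ j then Real.log (dist (x i) (x j)) else 0)
        - (Real.log (1 + ‖x i‖^2) + Real.log (1 + ‖x j‖^2))
        + (if i = j then 2 * Real.log (1 + ‖x i‖^2) else 0) := by
    intro i j
    by_cases h : i = j
    · subst h; simp; ring
    · simp only [h, ne_eq, not_false_eq_true, if_true, if_false]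
      rw [Real.log_div (pow_ne_zero _ (hd i j h)) (mul_ne_zero (hL i) (hL j)),
        Real.log_mul (hL i) (hL j), Real.log_pow]
      push_cast; ring
  rw [Real.log_prod fun i _ => Finset.prod_ne_zero_iff.2 fun j _ => hne i j]
  rw [Finset.sum_congr rfl fun i _ => Real.log_prod fun j _ => hne i j]
  rw [Finset.sum_congr rfl fun i _ => Finset.sum_congr rfl fun j _ => hlog i j]
  simp only [Finset.sum_add_distrib, Finset.sum_sub_distrib, ← Finset.mul_sum,
    Finset.sum_ite_eq, Finset.mem_univ, if_true, Finset.sum_const, Finset.card_univ,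
    Fintype.card_fin, nsmul_eq_mul]
  ring

lemma aux_muV : ∫ a, Real.log (1 + ‖a‖^2) ∂muV = 1 := by
  unfold muV
  rw [integral_withDensity_eq_integral_toReal_smul (by fun_prop) (by simp)]
  have h1 : ∀ x : EuclideanSpace ℝ (Fin 2), (ENNReal.ofReal (1 / (π * (1 + ‖x‖^2)^2))).toReal •
      Real.log (1 + ‖x‖^2) = (fun y : ℝ => (1 / (π * (1 + y^2)^2)) * Real.log (1 + y^2)) ‖x‖ := by
    intro x
    rw [ENNReal.toReal_ofReal (by positivity), smul_eq_mul]
  simp_rw [h1]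
  rw [integral_fun_norm_addHaar (volume : Measure (EuclideanSpace ℝ (Fin 2)))
    (fun y : ℝ => (1 / (π * (1 + y^2)^2)) * Real.log (1 + y^2))]
  have hv : (volume : Measure (EuclideanSpace ℝ (Fin 2))).real (Metric.ball 0 1) = π := by
    simp [Measure.real, EuclideanSpace.volume_ball_fin_two, Real.pi_pos.le]
  rw [hv]
  have h2 : ∫ y in Set.Ioi (0:ℝ), 2 * y * Real.log (1 + y^2) / (1 + y^2)^2
      = 0 - (-(Real.log (1 + (0:ℝ)^2) + 1) / (1 + (0:ℝ)^2)) := by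
    refine integral_Ioi_of_hasDerivAt_of_nonneg'
      (g := fun y : ℝ => -(Real.log (1 + y^2) + 1) / (1 + y^2)) ?_ ?_ ?_
    · intro y _
      have hy : 1 + y^2 ≠ 0 := by positivity
      have d1 : HasDerivAt (fun y : ℝ => 1 + y^2) (2*y) y := by
        simpa using (hasDerivAt_pow 2 y).const_add 1
      refine (((d1.log hy).add_const 1).neg.div d1 hy).congr_deriv ?_
      simp only [Pi.neg_apply]
      field_simp
      ring
    · intro y hy
      have : (0:ℝ) < y := hy
      have : 0 ≤ Real.log (1 + y^2) := Real.log_nonneg (by nlinarith)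
      positivity
    · have t1 : Tendsto (fun y : ℝ => 1 + y^2) atTop atTop :=
        tendsto_atTop_add_const_left _ _ (tendsto_pow_atTop (by norm_num))
      have t2 : Tendsto (fun w : ℝ => -(Real.log w + 1) / w) atTop (nhds 0) := by
        have e1 := Real.isLittleO_log_id_atTop.tendsto_div_nhds_zero
        have e2 := tendsto_inv_atTop_zero (𝕜 := ℝ)
        have := (e1.add e2).neg
        simp only [add_zero, neg_zero] at this
        refine this.congr fun w => ?_
        simp only [id]
        rw [neg_div, add_div, one_div]
      exact t2.comp t1
  simp only [finrank_euclideanSpace, Fintype.card_fin, Nat.add_one_sub_one, pow_one, smul_eq_mul,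
    nsmul_eq_mul]
  rw [← integral_const_mul, ← integral_const_mul]
  have h3 : (0:ℝ) - (-(Real.log (1 + (0:ℝ)^2) + 1) / (1 + (0:ℝ)^2)) = 1 := by simp
  refine Eq.trans ?_ (h2.trans h3)
  congr 1
  ext y
  have := Real.pi_pos
  have : 1 + y^2 ≠ 0 := by positivity
  push_cast
  norm_num
  field_simp

lemma aux_D_pos {n : ℕ} {a b : Fin n → ℂ} (h : 0 < Dprod a b) (i j : Fin n) (hij : i ≠ j) :
    a i * b j - a j * b i ≠ 0 := by
  intro h0
  have : Dprod a b = 0 := by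
    unfold Dprod
    refine Finset.prod_eq_zero (Finset.mem_univ i) (Finset.prod_eq_zero (Finset.mem_univ j) ?_)
    simp [hij, h0]
  linarith

/-- lifting a planar configuration -/
lemma aux_lift {n : ℕ} (x : Fin n → EuclideanSpace ℝ (Fin 2)) :
    ∃ q : Fin n → ℂ × ℂ, (∀ i, ‖(q i).1‖^2 + ‖(q i).2‖^2 = 1) ∧
      Dprod (fun i => (q i).1) (fun i => (q i).2) = ∏ i, ∏ j, if i ≠ j then
        dist (x i) (x j)^2 / ((1 + ‖x i‖^2) * (1 + ‖x j‖^2)) else 1 := by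
  set e := Complex.orthonormalBasisOneI.repr.symm with he
  have hs : ∀ i, (0:ℝ) < 1 + ‖x i‖^2 := fun i => by positivity
  have hns : ∀ i, ‖((Real.sqrt (1 + ‖x i‖^2) : ℝ) : ℂ)‖^2 = 1 + ‖x i‖^2 := by
    intro i
    rw [Complex.norm_real, Real.norm_eq_abs, sq_abs, Real.sq_sqrt (hs i).le]
  refine ⟨fun i => (e (x i) / (Real.sqrt (1 + ‖x i‖^2) : ℝ), 1 / (Real.sqrt (1 + ‖x i‖^2) : ℝ)), ?_, ?_⟩
  · intro i
    have := (hs i).ne'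
    simp only [norm_div, div_pow, hns, LinearIsometryEquiv.norm_map, norm_one]
    field_simp
    ring
  · unfold Dprod
    refine Finset.prod_congr rfl fun i _ => Finset.prod_congr rfl fun j _ => ?_
    split_ifs with h
    · have h1 : e (x i) / (Real.sqrt (1 + ‖x i‖^2) : ℝ) * (1 / (Real.sqrt (1 + ‖x j‖^2) : ℝ))
          - e (x j) / (Real.sqrt (1 + ‖x j‖^2) : ℝ) * (1 / (Real.sqrt (1 + ‖x i‖^2) : ℝ))
          = (e (x i) - e (x j)) / ((Real.sqrt (1 + ‖x i‖^2) : ℝ) * (Real.sqrt (1 + ‖x j‖^2) : ℝ)) := by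
        ring
      rw [h1, norm_div, norm_mul, div_pow, mul_pow, hns, hns, ← dist_eq_norm, e.dist_map]
    · rfl

theorem exists_balanced_minimizer (n : ℕ) (hn : 2 ≤ n) :
    ∃ x : Fin n → EuclideanSpace ℝ (Fin 2),
      (∀ z : Fin n → EuclideanSpace ℝ (Fin 2), wbarHamE n x ≤ wbarHamE n z) ∧
      (1 / (n : ℝ)) * ∑ i : Fin n, Real.log (1 + ‖x i‖^2)
        = ∫ a, Real.log (1 + ‖a‖^2) ∂muV ∧
      ∫ a, Real.log (1 + ‖a‖^2) ∂muV = 1 := by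
  rw [aux_muV]
  obtain ⟨p, hp, hmax⟩ := aux_exists_max n
  set a : Fin n → ℂ := fun i => (p i).1 with ha
  set b : Fin n → ℂ := fun i => (p i).2 with hb
  have hab : ∀ i, ‖a i‖^2 + ‖b i‖^2 = 1 := hp
  have hle : ∀ z : Fin n → EuclideanSpace ℝ (Fin 2), (∏ i, ∏ j, if i ≠ j then
        dist (z i) (z j)^2 / ((1 + ‖z i‖^2) * (1 + ‖z j‖^2)) else 1) ≤ Dprod a b := by
    intro z
    obtain ⟨q, hq, hqe⟩ := aux_lift z
    rw [← hqe]
    exact hmax q hq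
  have hpos : ∀ z : Fin n → EuclideanSpace ℝ (Fin 2), Function.Injective z →
      0 < (∏ i, ∏ j, if i ≠ j then
        dist (z i) (z j)^2 / ((1 + ‖z i‖^2) * (1 + ‖z j‖^2)) else 1) := by
    intro z hz
    refine Finset.prod_pos fun i _ => Finset.prod_pos fun j _ => ?_
    split_ifs with h
    · have := dist_pos.2 (hz.ne h)
      positivity
    · exact one_pos
  set e := Complex.orthonormalBasisOneI.repr with he
  have hD : 0 < Dprod a b := by
    have hinj : Function.Injective (fun i : Fin n => e ((i : ℕ) : ℂ)) := by
      intro i j hij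
      have := e.injective hij
      exact Fin.ext (by exact_mod_cast this)
    exact (hpos _ hinj).trans_le (hle _)
  have hbex : ∃ i, b i ≠ 0 := by
    by_contra! h
    exact aux_D_pos hD ⟨0, by omega⟩ ⟨1, by omega⟩ (by simp) (by simp [h])
  obtain ⟨w, hw⟩ := aux_balance a b hab hbex
  have hW : (0:ℝ) < 1 + ‖w‖^2 := by positivity
  have hden : ∀ i, w * b i - a i ≠ 0 := by
    intro i h0
    have : ∏ i, (‖w * b i - a i‖^2 / (1 + ‖w‖^2)) = 0 :=
      Finset.prod_eq_zero (Finset.mem_univ i) (by simp [h0])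
    rw [hw] at this
    exact (Real.exp_pos _).ne' this
  set y : Fin n → ℂ := fun i => (starRingEnd ℂ w * a i + b i) / (w * b i - a i) with hy
  have hyn : ∀ i, 1 + ‖y i‖^2 = (1 + ‖w‖^2) / ‖w * b i - a i‖^2 := by
    intro i
    have h1 : ‖w * b i - a i‖^2 ≠ 0 := pow_ne_zero _ (norm_ne_zero_iff.2 (hden i))
    have h2 : ‖starRingEnd ℂ w * a i + b i‖^2 + ‖w * b i - a i‖^2
        = (1 + ‖w‖^2) * (‖a i‖^2 + ‖b i‖^2) := by
      simp only [← Complex.normSq_eq_norm_sq, Complex.normSq_apply, Complex.add_re, Complex.add_im,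
        Complex.sub_re, Complex.sub_im, Complex.mul_re, Complex.mul_im, Complex.conj_re,
        Complex.conj_im]
      ring
    rw [hab i, mul_one] at h2
    simp only [hy, norm_div, div_pow]
    rw [← h2, add_div, div_self h1, add_comm]
  have hwc : (1 + w * starRingEnd ℂ w) = ((1 + ‖w‖^2 : ℝ) : ℂ) := by
    rw [Complex.mul_conj, Complex.normSq_eq_norm_sq]; push_cast; rfl
  have hyd : ∀ i j, dist (y i) (y j)
      = (1 + ‖w‖^2) * ‖a i * b j - a j * b i‖ / (‖w * b i - a i‖ * ‖w * b j - a j‖) := by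
    intro i j
    have h1 : y i - y j = ((1 + ‖w‖^2 : ℝ) : ℂ) * (a i * b j - a j * b i)
        / ((w * b i - a i) * (w * b j - a j)) := by
      rw [← hwc]
      simp only [hy]
      rw [div_sub_div _ _ (hden i) (hden j)]
      congr 1
      ring
    rw [dist_eq_norm, h1, norm_div, norm_mul, norm_mul, Complex.norm_real, Real.norm_of_nonneg hW.le]
  have hinj : Function.Injective (fun i => e (y i)) := by
    intro i j hij
    by_contra hne
    have h0 : dist (y i) (y j) = 0 := by rw [e.injective hij, dist_self]
    rw [hyd] at h0
    have h1 := norm_pos_iff.2 (aux_D_pos hD i j hne)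
    have h2 := norm_pos_iff.2 (hden i)
    have h3 := norm_pos_iff.2 (hden j)
    have : 0 < (1 + ‖w‖^2) * ‖a i * b j - a j * b i‖ / (‖w * b i - a i‖ * ‖w * b j - a j‖) := by
      positivity
    linarith
  have hDe : (∏ i, ∏ j, if i ≠ j then dist (e (y i)) (e (y j))^2 /
      ((1 + ‖e (y i)‖^2) * (1 + ‖e (y j)‖^2)) else 1) = Dprod a b := by
    unfold Dprod
    refine Finset.prod_congr rfl fun i _ => Finset.prod_congr rfl fun j _ => ?_
    split_ifs with h
    · rw [e.dist_map, e.norm_map, e.norm_map, hyn, hyn, hyd]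
      have h2 := norm_pos_iff.2 (hden i)
      have h3 := norm_pos_iff.2 (hden j)
      generalize ‖w * b i - a i‖ = s at *
      generalize ‖w * b j - a j‖ = t at *
      field_simp
    · rfl
  refine ⟨fun i => e (y i), ?_, ?_, rfl⟩
  · intro z
    by_cases hz : Function.Injective z
    · unfold wbarHamE
      rw [if_pos hinj, if_pos hz, EReal.coe_le_coe_iff, aux_energy_s9 _ hinj, aux_energy_s9 _ hz, hDe]
      have := Real.log_le_log (hpos z hz) (hle z)
      linarith
    · unfold wbarHamE
      rw [if_neg hz]
      exact le_top
  · have h1 : ∑ i, Real.log (1 + ‖e (y i)‖^2) = n := by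
      have h2 : ∀ i, Real.log (1 + ‖e (y i)‖^2)
          = - Real.log (‖w * b i - a i‖^2 / (1 + ‖w‖^2)) := by
        intro i
        rw [e.norm_map, hyn, ← Real.log_inv, inv_div]
      simp_rw [h2]
      rw [Finset.sum_neg_distrib, ← Real.log_prod, hw, Real.log_exp, neg_neg]
      intro i _
      have h2 := norm_pos_iff.2 (hden i)
      positivity
    rw [h1]
    have : (n:ℝ) ≠ 0 := by positivity
    field_simp
end

section
/- For every x ∈ ℝ²: ∫_{ℝ²} log|x−y| · (1/(π(1+|y|²)²)) dy = (1/2)·log(1+|x|²). Equivalently, the logarithmic potential U^{μ_V}(x) := −∫ log|x−y| dμ_V(y) equals −(1/2)log(1+|x|²), so that U^{μ_V} + V/2 ≡ 0 on ℝ² for V(x) = log(1+|x|²). -/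
open Real MeasureTheory

namespace LogPot

open Set Filter Topology

/-- Antiderivative of `2 r log r / (1+r²)²`. -/
noncomputable def G (r : ℝ) : ℝ := (r * log r) * (r / (1 + r ^ 2)) - (1 / 2) * log (1 + r ^ 2)

noncomputable def h (r : ℝ) : ℝ := (r * log r) * (2 / (1 + r ^ 2) ^ 2)

lemma G_cont : Continuous G := by
  unfold G
  have h1 : ∀ r : ℝ, 1 + r ^ 2 ≠ 0 := fun r => by positivity
  exact (Real.continuous_mul_log.mul (by fun_prop (disch := exact h1 _))).sub
    (continuous_const.mul (Continuous.log (by fun_prop) h1))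

lemma h_cont : Continuous h := by
  unfold h
  have h1 : ∀ r : ℝ, (1 + r ^ 2) ^ 2 ≠ 0 := fun r => by positivity
  exact Real.continuous_mul_log.mul (by fun_prop (disch := exact h1 _))

lemma G_deriv (r : ℝ) (hr : 0 < r) : HasDerivAt G (h r) r := by
  have h1 : (1 + r ^ 2) ≠ 0 := by positivity
  have e1 : HasDerivAt (fun r : ℝ => 1 + r ^ 2) (2 * r) r := by
    simpa using (hasDerivAt_pow 2 r).const_add 1
  have e2 := (Real.hasDerivAt_mul_log hr.ne').mul ((hasDerivAt_id r).div e1 h1)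
  have e3 := e2.sub ((e1.log h1).const_mul (1 / 2))
  refine e3.congr_deriv ?_
  simp only [h, id, Pi.div_apply]
  field_simp
  ring

lemma G_tendsto : Tendsto G atTop (𝓝 0) := by
  have a1 : Tendsto (fun r : ℝ => log r / (1 + r ^ 2)) atTop (𝓝 0) := by
    refine squeeze_zero' (g := fun r : ℝ => r⁻¹) ?_ ?_ tendsto_inv_atTop_zero
    · filter_upwards [eventually_ge_atTop 1] with r hr
      exact div_nonneg (log_nonneg hr) (by positivity)
    · filter_upwards [eventually_ge_atTop 1] with r hr
      have : log r ≤ r := (log_le_sub_one_of_pos (by linarith)).trans (by linarith)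
      rw [div_le_iff₀ (by positivity)]
      have h0 : r ≠ 0 := by positivity
      have : r⁻¹ * (1 + r ^ 2) = r⁻¹ + r := by field_simp
      have : 0 < r⁻¹ := by positivity
      linarith
  have a2 : Tendsto (fun r : ℝ => (1 / 2) * log (1 + (r⁻¹) ^ 2)) atTop (𝓝 0) := by
    have : Tendsto (fun r : ℝ => 1 + (r⁻¹) ^ 2) atTop (𝓝 (1 + 0 ^ 2)) :=
      (tendsto_inv_atTop_zero.pow 2).const_add 1
    have := (this.log (by norm_num)).const_mul (1 / 2)
    simpa using this
  have a3 := a1.neg.sub a2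
  simp only [neg_zero, sub_zero] at a3
  refine a3.congr' ?_
  filter_upwards [eventually_gt_atTop 0] with r hr
  have : 1 + (r⁻¹) ^ 2 = (1 + r ^ 2) / r ^ 2 := by field_simp; ring
  rw [this, log_div (by positivity) (by positivity), log_pow]
  unfold G
  field_simp
  push_cast
  ring

lemma h_int0 : IntegrableOn h (Ioi 0) := by
  rw [← Ioc_union_Ioi_eq_Ioi (zero_le_one (α := ℝ))]
  refine IntegrableOn.union ?_ ?_
  · exact (h_cont.continuousOn.integrableOn_Icc).mono_set Ioc_subset_Icc_self
  · refine integrableOn_Ioi_deriv_of_nonneg' (g := G)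
      (fun x hx => G_deriv x (lt_of_lt_of_le one_pos hx)) ?_ G_tendsto
    intro x hx
    have hx : 1 < x := hx
    have := log_nonneg hx.le
    unfold h
    positivity

noncomputable def k (A r : ℝ) : ℝ := (r * log (max r A)) * (2 / (1 + r ^ 2) ^ 2)

lemma k_eq1 (A r : ℝ) (hr : r ≤ A) : k A r = log A * (2 * r / (1 + r ^ 2) ^ 2) := by
  unfold k; rw [max_eq_right hr]; ring

lemma k_eq2 (A r : ℝ) (hr : A ≤ r) : k A r = h r := by
  unfold k h; rw [max_eq_left hr]

lemma cont1 (A : ℝ) : Continuous fun r : ℝ => log A * (2 * r / (1 + r ^ 2) ^ 2) := by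
  have h1 : ∀ r : ℝ, (1 + r ^ 2) ^ 2 ≠ 0 := fun r => by positivity
  fun_prop (disch := exact h1 _)

lemma k_intA (A : ℝ) : IntegrableOn (k A) (Ioc 0 A) := by
  refine IntegrableOn.congr_fun (f := fun r : ℝ => log A * (2 * r / (1 + r ^ 2) ^ 2)) ?_ ?_
    measurableSet_Ioc
  · exact ((cont1 A).continuousOn.integrableOn_Icc).mono_set Ioc_subset_Icc_self
  · intro r hr; exact (k_eq1 A r hr.2).symm

lemma k_intB (A : ℝ) (hA : 0 ≤ A) : IntegrableOn (k A) (Ioi A) := by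
  refine IntegrableOn.congr_fun (h_int0.mono_set (Ioi_subset_Ioi hA)) ?_ measurableSet_Ioi
  intro r hr; exact (k_eq2 A r (le_of_lt hr)).symm

lemma k_int (A : ℝ) (hA : 0 ≤ A) : IntegrableOn (k A) (Ioi 0) := by
  rw [← Ioc_union_Ioi_eq_Ioi hA]
  exact (k_intA A).union (k_intB A hA)

lemma k_val (A : ℝ) (hA : 0 ≤ A) : ∫ r in Ioi 0, k A r = (1 / 2) * log (1 + A ^ 2) := by
  rw [← Ioc_union_Ioi_eq_Ioi hA, setIntegral_union (Ioc_disjoint_Ioi le_rfl) measurableSet_Ioi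
    (k_intA A) (k_intB A hA)]
  have i2 : ∫ r in Ioi A, k A r = 0 - G A := by
    rw [setIntegral_congr_fun measurableSet_Ioi
      (fun r hr => k_eq2 A r (le_of_lt hr) : EqOn (k A) h (Ioi A))]
    exact integral_Ioi_of_hasDerivAt_of_tendsto G_cont.continuousWithinAt
      (fun x hx => G_deriv x (lt_of_le_of_lt hA hx)) (h_int0.mono_set (Ioi_subset_Ioi hA))
      G_tendsto
  have i1 : ∫ r in Ioc 0 A, k A r = log A * (A ^ 2 / (1 + A ^ 2)) := by
    rw [setIntegral_congr_fun measurableSet_Ioc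
      (fun r hr => k_eq1 A r hr.2 :
        EqOn (k A) (fun r : ℝ => log A * (2 * r / (1 + r ^ 2) ^ 2)) (Ioc 0 A)),
      ← intervalIntegral.integral_of_le hA]
    rw [intervalIntegral.integral_eq_sub_of_hasDerivAt
      (f := fun r : ℝ => log A * (r ^ 2 / (1 + r ^ 2)))]
    · simp
    · intro r _
      have h1 : (1 + r ^ 2) ≠ 0 := by positivity
      have e0 : HasDerivAt (fun r : ℝ => r ^ 2) (2 * r) r := by
        simpa using (hasDerivAt_pow 2 r)
      have e1 : HasDerivAt (fun r : ℝ => 1 + r ^ 2) (2 * r) r := e0.const_add 1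
      refine ((e0.div e1 h1).const_mul (log A)).congr_deriv ?_
      field_simp
      ring
    · exact (cont1 A).intervalIntegrable _ _
  rw [i1, i2, G]
  ring

/-- the angular integrand -/
noncomputable def L (a : ℂ) (r θ : ℝ) : ℝ := log ‖circleMap 0 r θ - a‖

lemma L_per (a : ℂ) (r : ℝ) : Function.Periodic (L a r) (2 * π) := by
  intro θ
  simp only [L, periodic_circleMap 0 r θ]

lemma L_int (a : ℂ) (r : ℝ) : IntegrableOn (L a r) (Ioo (-π) π) := by
  have h1 : IntervalIntegrable (L a r) volume 0 (2 * π) :=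
    circleIntegrable_log_norm_sub_const (a := a) (c := 0) r
  have h2 := (L_per a r).intervalIntegrable₀ (by positivity) h1 (-π) π
  rw [intervalIntegrable_iff_integrableOn_Ioo_of_le (by linarith [pi_pos])] at h2
  exact h2

lemma L_val (a : ℂ) (r : ℝ) (hr : 0 < r) :
    ∫ θ in Ioo (-π) π, L a r θ = 2 * π * log (max r ‖a‖) := by
  have h1 := circleAverage_log_norm_sub_const_eq_log_radius_add_posLog (a := a) (c := 0) hr.ne'
  rw [circleAverage_def] at h1
  have h2 := (L_per a r).intervalIntegral_add_eq (-π) 0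
  rw [show -π + 2 * π = π by ring, zero_add] at h2
  rw [← integral_Ioc_eq_integral_Ioo, ← intervalIntegral.integral_of_le (by linarith [pi_pos]), h2]
  have h3 : (2 * π)⁻¹ * ∫ θ in 0..2 * π, L a r θ = log r + log⁺ (r⁻¹ * ‖0 - a‖) := h1
  have h4 : log r + log⁺ (r⁻¹ * ‖0 - a‖) = log (max r ‖a‖) := by
    rw [posLog_eq_log_max_one (by positivity), ← log_mul hr.ne' (by positivity),
      mul_max_of_nonneg _ _ hr.le]
    congr 2
    · ring
    · rw [zero_sub, norm_neg]; field_simp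
  rw [h4] at h3
  rw [← h3]
  have := pi_pos
  field_simp

lemma L_abs (a : ℂ) (r : ℝ) (hr : 0 < r) :
    ∫ θ in Ioo (-π) π, |L a r θ| ≤ 2 * π * (2 * (r + ‖a‖)) - 2 * π * log (max r ‖a‖) := by
  have hfin : volume (Ioo (-π) π) ≠ ⊤ := by simp
  have hc : IntegrableOn (fun _ : ℝ => 2 * (r + ‖a‖)) (Ioo (-π) π) := integrableOn_const hfin
  calc ∫ θ in Ioo (-π) π, |L a r θ| ≤ ∫ θ in Ioo (-π) π, (2 * (r + ‖a‖) - L a r θ) := by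
        refine integral_mono (L_int a r).abs (hc.sub (L_int a r)) ?_
        intro θ
        have h1 := half_mul_log_add_log_abs (x := ‖circleMap 0 r θ - a‖)
        have h2 : log⁺ ‖circleMap 0 r θ - a‖ ≤ r + ‖a‖ := by
          rw [posLog_apply]
          refine max_le (by positivity) ?_
          refine (log_le_self (norm_nonneg _)).trans ((norm_sub_le _ _).trans ?_)
          simp [abs_of_pos hr]
        simp only [L]
        linarith
    _ = _ := by
        rw [integral_sub hc (L_int a r), L_val a r hr]
        simp
        left
        rw [max_eq_left (by linarith [pi_pos])]
        ring

noncomputable def F (a : ℂ) (p : ℝ × ℝ) : ℝ :=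
  p.1 * (L a p.1 p.2 * (1 / (π * (1 + p.1 ^ 2) ^ 2)))

lemma F_meas (a : ℂ) : Measurable (F a) := by
  unfold F L circleMap
  fun_prop

lemma F_val (a : ℂ) (r : ℝ) (hr : 0 < r) : ∫ θ in Ioo (-π) π, F a (r, θ) = k ‖a‖ r := by
  simp only [F]
  rw [integral_const_mul, integral_mul_const, L_val a r hr, k]
  have := pi_pos
  field_simp

lemma F_abs (a : ℂ) (r : ℝ) (hr : 0 < r) :
    ∫ θ in Ioo (-π) π, ‖F a (r, θ)‖ ≤ 4 * (1 + ‖a‖) * (1 + r ^ 2)⁻¹ - k ‖a‖ r := by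
  have hp := pi_pos
  have e : ∀ θ, ‖F a (r, θ)‖ = r * (|L a r θ| * (1 / (π * (1 + r ^ 2) ^ 2))) := by
    intro θ
    simp only [F, norm_mul, Real.norm_eq_abs]
    rw [abs_of_pos hr, abs_of_pos (show 0 < 1 / (π * (1 + r ^ 2) ^ 2) by positivity)]
  simp only [e]
  rw [integral_const_mul, integral_mul_const]
  have h1 := L_abs a r hr
  have h2 : r * ((∫ θ in Ioo (-π) π, |L a r θ|) * (1 / (π * (1 + r ^ 2) ^ 2))) ≤
      r * ((2 * π * (2 * (r + ‖a‖)) - 2 * π * log (max r ‖a‖)) * (1 / (π * (1 + r ^ 2) ^ 2))) := by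
    gcongr
  refine h2.trans ?_
  have h3 : r * ((2 * π * (2 * (r + ‖a‖)) - 2 * π * log (max r ‖a‖)) *
      (1 / (π * (1 + r ^ 2) ^ 2))) = 4 * (r * (r + ‖a‖)) / (1 + r ^ 2) ^ 2 - k ‖a‖ r := by
    unfold k; field_simp; ring
  rw [h3]
  gcongr
  rw [div_le_iff₀ (by positivity)]
  have h4 : 4 * (1 + ‖a‖) * (1 + r ^ 2)⁻¹ * (1 + r ^ 2) ^ 2 = 4 * (1 + ‖a‖) * (1 + r ^ 2) := by
    field_simp
  rw [h4]
  have := norm_nonneg a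
  nlinarith [mul_nonneg this (sq_nonneg (r - 1)), mul_nonneg this (sq_nonneg r)]

lemma F_int (a : ℂ) : Integrable (F a)
    ((volume.restrict (Ioi (0 : ℝ))).prod (volume.restrict (Ioo (-π) π))) := by
  rw [integrable_prod_iff (F_meas a).aestronglyMeasurable]
  refine ⟨ae_of_all _ fun r => ?_, ?_⟩
  · simp only [F]
    exact ((L_int a r).mul_const _).const_mul _
  · refine Integrable.mono' (g := fun r : ℝ => 4 * (1 + ‖a‖) * (1 + r ^ 2)⁻¹ - k ‖a‖ r)
      ((integrable_inv_one_add_sq.integrableOn.const_mul _).sub (k_int _ (norm_nonneg a))) ?_ ?_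
    · exact (F_meas a).aestronglyMeasurable.norm.integral_prod_right'
    · filter_upwards [ae_restrict_mem measurableSet_Ioi] with r hr
      rw [Real.norm_eq_abs, abs_of_nonneg (integral_nonneg fun _ => norm_nonneg _)]
      exact F_abs a r hr

lemma complex_val (a : ℂ) :
    ∫ z : ℂ, Real.log (dist a z) * (1 / (π * (1 + ‖z‖ ^ 2) ^ 2))
      = (1 / 2) * Real.log (1 + ‖a‖ ^ 2) := by
  rw [← Complex.integral_comp_polarCoord_symm]
  have e : ∀ p : ℝ × ℝ, p.1 • (Real.log (dist a (Complex.polarCoord.symm p)) *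
      (1 / (π * (1 + ‖Complex.polarCoord.symm p‖ ^ 2) ^ 2))) = F a p := by
    intro p
    rw [Complex.norm_polarCoord_symm, sq_abs, dist_comm, dist_eq_norm, F, L, smul_eq_mul]
    congr 5
    rw [Complex.polarCoord_symm_apply, circleMap, Complex.exp_mul_I]
    push_cast
    ring
  simp only [e]
  rw [show polarCoord.target = Ioi (0 : ℝ) ×ˢ Ioo (-π) π from rfl, Measure.volume_eq_prod,
    ← Measure.prod_restrict, integral_prod _ (F_int a),
    setIntegral_congr_fun measurableSet_Ioi
      (fun r hr => F_val a r hr : EqOn (fun r => ∫ θ in Ioo (-π) π, F a (r, θ)) (k ‖a‖) (Ioi 0)),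
    k_val _ (norm_nonneg a)]

end LogPot

/-- For every `x ∈ ℝ²`, `∫ log|x−y| · 1/(π(1+|y|²)²) dy = (1/2) log(1+|x|²)`;
equivalently the logarithmic potential of `μ_V` is `U^{μ_V}(x) = −(1/2)log(1+|x|²)`,
so `U^{μ_V} + V/2 ≡ 0` for `V(x) = log(1+|x|²)`. -/
theorem log_potential_muV (x : EuclideanSpace ℝ (Fin 2)) :
    ∫ y, Real.log (dist x y) * (1 / (π * (1 + ‖y‖^2)^2)) = (1/2) * Real.log (1 + ‖x‖^2) := by
  have h := LogPot.complex_val (Complex.orthonormalBasisOneI.repr.symm x)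
  rw [← Complex.orthonormalBasisOneI.measurePreserving_repr_symm.integral_comp
    Complex.orthonormalBasisOneI.repr.symm.toHomeomorph.measurableEmbedding] at h
  simpa only [LinearIsometryEquiv.dist_map, LinearIsometryEquiv.norm_map] using h
end
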